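/- Replacing each edge uv of a graph G by a copy of K₅ on {u, v, a_uv, b_uv, c_uv} with three new private vertices yields a graph G' such that G has a vertex cover of size at most k if and only if G' has a set of at most k vertices whose deletion leaves a planar graph. Hence Planar Vertex Deletion is NP-hard and, assuming ETH, requires time 2^{Ω(k)}. -/

import Mathlib

def FPF {F : Type*} (π : Equiv.Perm F) : Prop := π * π = 1 ∧ ∀ x, π x ≠ x

def orbSet {F : Type*} (S : Set (Equiv.Perm F)) (x : F) : Set F :=
  MulAction.orbit (Subgroup.closure S) x

noncomputable def orbCount {F : Type*} (S : Set (Equiv.Perm F)) : ℕ :=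
  Nat.card (MulAction.orbitRel.Quotient (Subgroup.closure S) F)

noncomputable def genus {F : Type*} (θ σ' φ' : Equiv.Perm F) : ℤ :=
  (orbCount {θ, σ'} : ℤ) - orbCount {σ', φ'} - orbCount {θ, φ'} + 2 * orbCount {θ, σ', φ'}

def IsGraphEmb {F : Type*} (θ σ' φ' : Equiv.Perm F) : Prop :=
  FPF θ ∧ FPF σ' ∧ FPF φ' ∧ ∀ x : F, Nat.card (orbSet {θ, σ'} x) = 4

def IsEdgeDeletion {F : Type*} (σ' φ' : Equiv.Perm F) (e : Set F)
    (θ₀ σ₀ φ₀ : Equiv.Perm {f : F // f ∉ e}) (θ : Equiv.Perm F) : Prop :=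
  (∀ a : {f : F // f ∉ e}, (θ₀ a : F) = θ a ∧ (σ₀ a : F) = σ' a) ∧
  (∀ a : {f : F // f ∉ e}, ∃ m : ℕ,
     ((φ' * σ') ^ m) (φ' a) ∉ e ∧ (∀ j < m, ((φ' * σ') ^ j) (φ' a) ∈ e) ∧
     (φ₀ a : F) = ((φ' * σ') ^ m) (φ' a))

/-- The combinatorial embedding `(θ, σ, φ)` with flag set `Fl` realizes the simple
graph `G` via the assignment `p` of flags to graph vertices. -/
def Realizes {Fl V : Type*} (θ σ' φ' : Equiv.Perm Fl) (G : SimpleGraph V) (p : Fl → V) : Prop :=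
  (∀ f, p (σ' f) = p f) ∧ (∀ f, p (φ' f) = p f) ∧
  (∀ f, G.Adj (p f) (p (θ f))) ∧
  (∀ f f', p f = p f' → f' ∈ orbSet {σ', φ'} f) ∧
  (∀ u v, G.Adj u v → ∃ f, p f = u ∧ p (θ f) = v) ∧
  (∀ f f', p f = p f' → p (θ f) = p (θ f') → f' ∈ orbSet {θ, σ'} f)

/-- The graph `B_ℓ`: `ℓ` disjoint copies of `K₅` minus an edge (the missing edge of
copy `i` joining `(i,0)` and `(i,1)`), an apex `inr 0 = v` adjacent to every `(i,0)`,
and an apex `inr 1 = w` adjacent to every `(i,1)`. -/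
def Bgraph (ℓ : ℕ) : SimpleGraph ((Fin ℓ × Fin 5) ⊕ Fin 2) :=
  SimpleGraph.fromRel (fun a b =>
    match a, b with
    | .inl (i, x), .inl (j, y) => i = j ∧ x ≠ y ∧ ¬(x = 0 ∧ y = 1) ∧ ¬(x = 1 ∧ y = 0)
    | .inl (_, x), .inr z => (z = 0 ∧ x = 0) ∨ (z = 1 ∧ x = 1)
    | .inr _, .inl _ => False
    | .inr _, .inr _ => False)

/-- `H` is planar: it is realized by some combinatorial embedding of genus `0`. -/
def IsPlanarG {W : Type*} (H : SimpleGraph W) : Prop :=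
  ∃ (Fl : Type) (_ : Fintype Fl) (θ σ' φ' : Equiv.Perm Fl) (p : Fl → W),
    IsGraphEmb θ σ' φ' ∧ Realizes θ σ' φ' H p ∧ genus θ σ' φ' ≤ 0

/-- Replace every edge `uv` of `G` by a `K₅` on `u, v` and three private new vertices. -/
def gadget {V : Type*} (G : SimpleGraph V) : SimpleGraph (V ⊕ (G.edgeSet × Fin 3)) :=
  SimpleGraph.fromRel (fun a b =>
    match a, b with
    | .inl u, .inl w => G.Adj u w
    | .inl u, .inr ⟨e, _⟩ => u ∈ (e : Sym2 V)
    | .inr ⟨e, _⟩, .inl u => u ∈ (e : Sym2 V)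
    | .inr ⟨e, i⟩, .inr ⟨e', j⟩ => e = e' ∧ i ≠ j)

/-!
Let `C` be a vertex cover of `G`. Deleting `C` from `gadget G` takes at least one end away from
every `K₅`, so what remains of each of them is a `K₃` or a `K₄` meeting the others in at most one
vertex. Complete graphs on three and four vertices are planar, and a union of planar graphs, each
meeting the others in at most one vertex, is planar: the spheres are glued together at the common
vertices.

Conversely, a set `S` whose deletion leaves a planar graph meets every `K₅`, and replacing each
private vertex in `S` by an end of its edge gives a vertex cover of at most the same size.

That a planar graph has no `K₅` follows from the inequality `E ≤ 3V - 6`, which is needed for the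
subgraphs of an embedded graph. The orbits of a set of permutations of the flags are counted by the
dimension of the space of its invariant functions with values in `ZMod 2`. Given a subgraph, the
functions constant on its components and those constant on the faces of the whole embedding are
orthogonal to the functions constant on the corners and to those constant on the edges, where the
edges of the subgraph are split into their two sides. Comparing dimensions bounds the number of
faces of the subgraph from below, and each of these faces has at least three edges.
-/

section Orbits

variable {F X : Type*} {S : Set (Equiv.Perm F)} {x y : F}

theorem mem_orbSet_self : x ∈ orbSet S x := MulAction.mem_orbit_self x

theorem apply_mem_orbSet {s : Equiv.Perm F} (hs : s ∈ S) (h : y ∈ orbSet S x) :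
    s y ∈ orbSet S x :=
  (MulAction.mem_orbit_of_mem_orbit (⟨s, Subgroup.subset_closure hs⟩ : Subgroup.closure S) h :)

theorem apply_eq_of_mem_orbSet {f : F → X} (hf : ∀ s ∈ S, ∀ x, f (s x) = f x)
    (h : y ∈ orbSet S x) : f y = f x := by
  obtain ⟨⟨g, hg⟩, rfl⟩ := h
  have key : ∀ z, f (g z) = f z := by
    induction hg using Subgroup.closure_induction with
    | mem s hs => exact hf s hs
    | one => exact fun z => rfl
    | mul a b _ _ ha hb => exact fun z => (ha (b z)).trans (hb z)
    | inv a _ ha =>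
      exact fun z => by rw [← ha, ← Equiv.Perm.mul_apply, mul_inv_cancel, Equiv.Perm.one_apply]
  exact key x

theorem apply_mem_orbSet_iff {s : Equiv.Perm F} (hs : s ∈ S) :
    s y ∈ orbSet S x ↔ y ∈ orbSet S x := by
  refine ⟨fun h => ?_, apply_mem_orbSet hs⟩
  have hinv : s⁻¹ (s y) ∈ orbSet S x :=
    MulAction.mem_orbit_of_mem_orbit
      (⟨s⁻¹, inv_mem (Subgroup.subset_closure hs)⟩ : Subgroup.closure S) h
  simpa using hinv

theorem mem_orbSet_comm : y ∈ orbSet S x ↔ x ∈ orbSet S y := MulAction.mem_orbit_symm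

theorem orbSet_eq_of_mem (h : y ∈ orbSet S x) : orbSet S y = orbSet S x :=
  MulAction.orbit_eq_iff.2 h

/-- The `ZMod 2`-valued functions on `F` that are constant on the orbits of `S`. They linearize
orbit counting: their dimension is the number of orbits. -/
def orbInvariants (S : Set (Equiv.Perm F)) : Submodule (ZMod 2) (F → ZMod 2) where
  carrier := {h | ∀ s ∈ S, ∀ x, h (s x) = h x}
  add_mem' ha hb s hs x := by simp only [Pi.add_apply, ha s hs x, hb s hs x]
  zero_mem' _ _ _ := rfl
  smul_mem' c h hh s hs x := by simp only [Pi.smul_apply, hh s hs x]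

theorem indicator_orbSet_mem_orbInvariants : (orbSet S x).indicator 1 ∈ orbInvariants S := by
  classical
  intro s hs y
  simp only [Set.indicator_apply, apply_mem_orbSet_iff hs, Pi.one_apply]

theorem mem_orbSet_iff_forall_orbInvariants :
    y ∈ orbSet S x ↔ ∀ h ∈ orbInvariants S, h y = h x := by
  refine ⟨fun hy h hh => apply_eq_of_mem_orbSet hh hy, fun hy => ?_⟩
  by_contra hne
  simpa [hne, mem_orbSet_self] using hy _ (indicator_orbSet_mem_orbInvariants (S := S) (x := x))

/-- A function on the set of orbits of `S`, read as an `S`-invariant function on `F`. -/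
def orbInvariantsEquiv (S : Set (Equiv.Perm F)) :
    (MulAction.orbitRel.Quotient (Subgroup.closure S) F → ZMod 2) ≃ₗ[ZMod 2] orbInvariants S where
  toFun k := ⟨fun x => k (Quotient.mk _ x), fun _ hs _ =>
    congrArg k (Quotient.sound (apply_mem_orbSet hs mem_orbSet_self))⟩
  map_add' _ _ := rfl
  map_smul' _ _ := rfl
  invFun h := Quotient.lift h.1 fun a b (hab : a ∈ orbSet S b) => apply_eq_of_mem_orbSet h.2 hab
  left_inv _ := funext fun q => Quotient.inductionOn q fun _ => rfl
  right_inv _ := rfl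

theorem finrank_orbInvariants [Finite F] (S : Set (Equiv.Perm F)) :
    Module.finrank (ZMod 2) (orbInvariants S) = orbCount S := by
  have : Fintype (MulAction.orbitRel.Quotient (Subgroup.closure S) F) := Fintype.ofFinite _
  rw [← (orbInvariantsEquiv S).finrank_eq, Module.finrank_fintype_fun_eq_card, orbCount,
    Nat.card_eq_fintype_card]

theorem ncard_range_le_orbCount [Finite F] {f : F → X} (hf : ∀ s ∈ S, ∀ x, f (s x) = f x) :
    (Set.range f).ncard ≤ orbCount S := by
  let g : MulAction.orbitRel.Quotient (Subgroup.closure S) F → X :=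
    Quotient.lift f fun a b (hab : a ∈ orbSet S b) => apply_eq_of_mem_orbSet hf hab
  have hg : Set.range f = Set.range g := (Set.range_quot_lift _).symm
  rw [hg, ← Set.image_univ, orbCount, ← Set.ncard_univ]
  exact Set.ncard_image_le Set.finite_univ

theorem orbCount_eq_sum_inv_card [Fintype F] (S : Set (Equiv.Perm F)) :
    (orbCount S : ℚ) = ∑ x, (Nat.card (orbSet S x) : ℚ)⁻¹ := by
  classical
  let mk : F → MulAction.orbitRel.Quotient (Subgroup.closure S) F := Quotient.mk _
  have : Fintype (MulAction.orbitRel.Quotient (Subgroup.closure S) F) := Fintype.ofFinite _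
  have hmk : ∀ x y, mk y = mk x ↔ y ∈ orbSet S x := fun x y => Quotient.eq
  have hfib : ∀ q, ∑ x with mk x = q, (Nat.card (orbSet S x) : ℚ)⁻¹ = 1 := by
    intro q
    obtain ⟨x, rfl⟩ : ∃ x, mk x = q := Quotient.exists_rep q
    have hcard : Nat.card (orbSet S x) = (Finset.univ.filter (mk · = mk x)).card :=
      Nat.subtype_card _ fun y => by simp [hmk]
    have hpos : (Nat.card (orbSet S x) : ℚ) ≠ 0 :=
      Nat.cast_ne_zero.2 (Nat.card_pos_iff.2 ⟨⟨x, mem_orbSet_self⟩, inferInstance⟩).ne'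
    have hconst : ∀ y ∈ Finset.univ.filter (mk · = mk x),
        (Nat.card (orbSet S y) : ℚ)⁻¹ = (Nat.card (orbSet S x) : ℚ)⁻¹ := fun y hy => by
      rw [orbSet_eq_of_mem ((hmk x y).1 (Finset.mem_filter.1 hy).2)]
    rw [Finset.sum_congr rfl hconst, Finset.sum_const, ← hcard, nsmul_eq_mul,
      mul_inv_cancel₀ hpos]
  rw [← Finset.sum_fiberwise Finset.univ mk, Finset.sum_congr rfl fun q _ => hfib q]
  simp [orbCount]

theorem mul_orbCount_eq_card [Finite F] {n : ℕ} (hn : ∀ x, Nat.card (orbSet S x) = n) :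
    n * orbCount S = Nat.card F := by
  have := Fintype.ofFinite F
  have h := orbCount_eq_sum_inv_card S
  simp only [hn, Finset.sum_const, Finset.card_univ, nsmul_eq_mul,
    ← Nat.card_eq_fintype_card] at h
  rcases isEmpty_or_nonempty F with hF | ⟨⟨x⟩⟩
  · simp [orbCount]
  have hpos : (n : ℚ) ≠ 0 :=
    Nat.cast_ne_zero.2 (hn x ▸ (Nat.card_pos_iff.2 ⟨⟨x, mem_orbSet_self⟩, inferInstance⟩).ne')
  exact_mod_cast (show (n * orbCount S : ℚ) = Nat.card F by
    rw [h, mul_left_comm, mul_inv_cancel₀ hpos, mul_one])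

theorem orbSet_subset {A : Set F} (hS : ∀ s ∈ S, ∀ z, s (s z) = z)
    (hA : ∀ s ∈ S, ∀ z ∈ A, s z ∈ A) (hx : x ∈ A) : orbSet S x ⊆ A := fun y hy => by
  have hinv : ∀ s ∈ S, ∀ z, (s z ∈ A) = (z ∈ A) := fun s hs z =>
    propext ⟨fun h => hS s hs z ▸ hA s hs _ h, hA s hs z⟩
  exact (apply_eq_of_mem_orbSet hinv hy).mpr hx

theorem orbSet_pair_eq {a b : Equiv.Perm F} (ha : ∀ x, a (a x) = x) (hb : ∀ x, b (b x) = x)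
    (hab : ∀ x, a (b x) = b (a x)) : orbSet {a, b} x = {x, b x, a x, b (a x)} := by
  apply subset_antisymm
  · refine orbSet_subset ?_ ?_ (Set.mem_insert _ _)
    · rintro s (rfl | rfl)
      exacts [ha, hb]
    · rintro s (rfl | rfl) z (rfl | rfl | rfl | rfl) <;>
        simp [ha, hb, hab]
  · have ha' : a ∈ ({a, b} : Set (Equiv.Perm F)) := Or.inl rfl
    have hb' : b ∈ ({a, b} : Set (Equiv.Perm F)) := Or.inr rfl
    rintro y (rfl | rfl | rfl | rfl)
    exacts [mem_orbSet_self, apply_mem_orbSet hb' mem_orbSet_self,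
      apply_mem_orbSet ha' mem_orbSet_self,
      apply_mem_orbSet hb' (apply_mem_orbSet ha' mem_orbSet_self)]

theorem orbSet_singleton_eq {a : Equiv.Perm F} (ha : ∀ x, a (a x) = x) :
    orbSet {a} x = {x, a x} := by
  rw [← Set.pair_eq_singleton, orbSet_pair_eq ha ha fun _ => rfl, ha]
  simp [Set.pair_comm]

end Orbits

section FPF

variable {F : Type*} {θ σ φ : Equiv.Perm F}

theorem fpf_iff {π : Equiv.Perm F} : FPF π ↔ ∀ x, π (π x) = x ∧ π x ≠ x := by
  rw [FPF, Equiv.ext_iff, forall_and]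
  rfl

theorem FPF.apply_apply (hπ : FPF φ) (x : F) : φ (φ x) = x := (fpf_iff.1 hπ x).1

theorem FPF.apply_ne (hπ : FPF φ) (x : F) : φ x ≠ x := hπ.2 x

theorem FPF.sum_eq_zero [Fintype F] (hφ : FPF φ) {h : F → ZMod 2} (hh : ∀ x, h (φ x) = h x) :
    ∑ x, h x = 0 :=
  Finset.sum_involution (fun x _ => φ x) (fun x _ => by rw [hh, CharTwo.add_self_eq_zero])
    (fun x _ _ => hφ.apply_ne x) (fun _ _ => Finset.mem_univ _) fun x _ => hφ.apply_apply x

theorem FPF.card_orbSet_singleton (hφ : FPF φ) (x : F) : Nat.card (orbSet {φ} x) = 2 := by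
  rw [Nat.card_coe_set_eq, orbSet_singleton_eq hφ.apply_apply,
    Set.ncard_pair (hφ.apply_ne x).symm]

theorem FPF.apply_ne_apply_of_card_orbSet_pair (hθ : FPF θ) (hσ : FPF σ) {x : F}
    (h : Nat.card (orbSet {θ, σ} x) = 4) : θ x ≠ σ x := fun heq => by
  have hsub : orbSet {θ, σ} x ⊆ {x, σ x} := by
    refine orbSet_subset ?_ ?_ (Set.mem_insert _ _)
    · rintro s (rfl | rfl)
      exacts [hθ.apply_apply, hσ.apply_apply]
    · rintro s (rfl | rfl) z (rfl | rfl)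
      exacts [Or.inr heq, Or.inl (heq ▸ hθ.apply_apply _), Or.inr rfl, Or.inl (hσ.apply_apply _)]
  have hle := (Set.ncard_le_ncard hsub).trans (Set.ncard_insert_le _ _)
  rw [← Nat.card_coe_set_eq, h, Set.ncard_singleton] at hle
  omega

theorem FPF.apply_comm_of_card_orbSet_pair (hθ : FPF θ) (hσ : FPF σ) {x : F}
    (h : Nat.card (orbSet {θ, σ} x) = 4) : θ (σ x) = σ (θ x) := by
  classical
  have hne := hθ.apply_ne_apply_of_card_orbSet_pair hσ h
  rw [Nat.card_coe_set_eq] at h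
  have hfin : (orbSet {θ, σ} x).Finite := Set.finite_of_ncard_ne_zero (by omega)
  have hθm : ∀ {y}, y ∈ orbSet {θ, σ} x → θ y ∈ orbSet {θ, σ} x := apply_mem_orbSet (Or.inl rfl)
  have hσm : ∀ {y}, y ∈ orbSet {θ, σ} x → σ y ∈ orbSet {θ, σ} x := apply_mem_orbSet (Or.inr rfl)
  have hx : x ∈ orbSet {θ, σ} x := mem_orbSet_self
  by_contra hc
  let T : Finset F := {x, σ x, θ x, σ (θ x), θ (σ x)}
  have hT : (T : Set F) ⊆ orbSet {θ, σ} x := by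
    simp only [T, Finset.coe_insert, Finset.coe_singleton, Set.insert_subset_iff,
      Set.singleton_subset_iff]
    exact ⟨hx, hσm hx, hθm hx, hσm (hθm hx), hθm (hσm hx)⟩
  have hcard : T.card = 5 := by
    have hθθ := hθ.apply_apply
    have hσσ := hσ.apply_apply
    have hθne := hθ.apply_ne
    have hσne := hσ.apply_ne
    iterate 4 rw [Finset.card_insert_of_notMem (by grind)]
    rfl
  have hle := Set.ncard_le_ncard hT hfin
  rw [Set.ncard_coe_finset] at hle
  omega

theorem FPF.card_orbSet_pair_eq_four (hθ : FPF θ) (hσ : FPF σ)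
    (hcomm : ∀ x, θ (σ x) = σ (θ x)) {x : F} (hne : θ x ≠ σ x) :
    Nat.card (orbSet {θ, σ} x) = 4 := by
  classical
  have hcard : ({x, σ x, θ x, σ (θ x)} : Finset F).card = 4 := by
    iterate 3 rw [Finset.card_insert_of_notMem
      (by grind [hθ.apply_apply, hσ.apply_apply, hθ.apply_ne, hσ.apply_ne])]
    rfl
  rw [Nat.card_coe_set_eq, orbSet_pair_eq hθ.apply_apply hσ.apply_apply hcomm, ← hcard,
    ← Set.ncard_coe_finset]
  simp

theorem isGraphEmb_iff : IsGraphEmb θ σ φ ↔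
    FPF θ ∧ FPF σ ∧ FPF φ ∧ (∀ x, θ (σ x) = σ (θ x)) ∧ ∀ x, θ x ≠ σ x := by
  refine and_congr_right fun hθ => and_congr_right fun hσ => and_congr_right fun _ => ?_
  exact ⟨fun h => ⟨fun x => hθ.apply_comm_of_card_orbSet_pair hσ (h x),
    fun x => hθ.apply_ne_apply_of_card_orbSet_pair hσ (h x)⟩,
    fun h x => hθ.card_orbSet_pair_eq_four hσ h.1 (h.2 x)⟩

theorem FPF.apply_eq_of_forall_ne [Finite F] (hσ : FPF σ) (hφ : FPF φ) {h : F → ZMod 2} {a : F}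
    (hhσ : ∀ x, h (σ x) = h x) (hhφ : ∀ x, x ≠ a → x ≠ φ a → h (φ x) = h x) :
    h (φ a) = h a := by
  classical
  have := Fintype.ofFinite F
  let k := Function.update h a (h (φ a))
  have hk : ∀ x, k (φ x) = k x := fun x => by
    by_cases hxa : x = a
    · simp [k, hxa, Function.update_of_ne (hφ.apply_ne a)]
    by_cases hxb : x = φ a
    · simp [k, hxb, hφ.apply_apply, Function.update_of_ne (hφ.apply_ne a)]
    have hφx : φ x ≠ a := fun h => hxb (h ▸ (hφ.apply_apply x).symm)
    simp only [k, Function.update_of_ne hφx, Function.update_of_ne hxa, hhφ x hxa hxb]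
  have hsum : ∑ x, k x = ∑ x, h x := (hφ.sum_eq_zero hk).trans (hσ.sum_eq_zero hhσ).symm
  rw [Finset.sum_update_of_mem (Finset.mem_univ a),
    ← Finset.add_sum_erase _ h (Finset.mem_univ a), Finset.sdiff_singleton_eq_erase] at hsum
  exact add_right_cancel hsum

end FPF

section Sum

variable {F₁ F₂ F F' : Type*}

theorem map_mem_orbSet {S : Set (Equiv.Perm F)} {S' : Set (Equiv.Perm F')} {g : F → F'}
    (hg : ∀ s ∈ S, ∃ s' ∈ S', ∀ x, g (s x) = s' (g x)) {x y : F} (h : y ∈ orbSet S x) :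
    g y ∈ orbSet S' (g x) := by
  have hinv : ∀ s ∈ S, ∀ z, (g (s z) ∈ orbSet S' (g x)) = (g z ∈ orbSet S' (g x)) :=
    fun s hs z => by
      obtain ⟨s', hs', hgs⟩ := hg s hs
      rw [hgs, apply_mem_orbSet_iff hs']
  exact (apply_eq_of_mem_orbSet (f := fun z => g z ∈ orbSet S' (g x)) hinv h).mpr mem_orbSet_self

theorem orbCount_sumCongr [Finite F₁] [Finite F₂] (S : Set (Equiv.Perm F₁ × Equiv.Perm F₂)) :
    orbCount ((fun s => Equiv.Perm.sumCongr s.1 s.2) '' S) =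
      orbCount (Prod.fst '' S) + orbCount (Prod.snd '' S) := by
  let e : orbInvariants ((fun s => Equiv.Perm.sumCongr s.1 s.2) '' S) ≃ₗ[ZMod 2]
      orbInvariants (Prod.fst '' S) × orbInvariants (Prod.snd '' S) :=
    { toFun := fun h =>
        (⟨h.1 ∘ Sum.inl, by
          rintro _ ⟨s, hs, rfl⟩ x
          exact h.2 _ ⟨s, hs, rfl⟩ (Sum.inl x)⟩,
        ⟨h.1 ∘ Sum.inr, by
          rintro _ ⟨s, hs, rfl⟩ x
          exact h.2 _ ⟨s, hs, rfl⟩ (Sum.inr x)⟩)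
      map_add' := fun _ _ => rfl
      map_smul' := fun _ _ => rfl
      invFun := fun h => ⟨Sum.elim h.1.1 h.2.1, by
        rintro _ ⟨s, hs, rfl⟩ (x | x)
        exacts [h.1.2 _ ⟨s, hs, rfl⟩ x, h.2.2 _ ⟨s, hs, rfl⟩ x]⟩
      left_inv := fun h => Subtype.ext (Sum.elim_comp_inl_inr h.1)
      right_inv := fun _ => rfl }
  rw [← finrank_orbInvariants, e.finrank_eq, Module.finrank_prod, finrank_orbInvariants,
    finrank_orbInvariants]

variable {θ₁ σ₁ φ₁ : Equiv.Perm F₁} {θ₂ σ₂ φ₂ : Equiv.Perm F₂}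

theorem genus_sumCongr [Finite F₁] [Finite F₂] :
    genus (θ₁.sumCongr θ₂) (σ₁.sumCongr σ₂) (φ₁.sumCongr φ₂) =
      genus θ₁ σ₁ φ₁ + genus θ₂ σ₂ φ₂ := by
  have hpair : ∀ (a b : Equiv.Perm F₁ × Equiv.Perm F₂),
      orbCount {a.1.sumCongr a.2, b.1.sumCongr b.2} =
        orbCount {a.1, b.1} + orbCount {a.2, b.2} := fun a b => by
    simpa only [Set.image_pair] using orbCount_sumCongr {a, b}
  have htriple : orbCount {θ₁.sumCongr θ₂, σ₁.sumCongr σ₂, φ₁.sumCongr φ₂} =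
      orbCount {θ₁, σ₁, φ₁} + orbCount {θ₂, σ₂, φ₂} := by
    simpa only [Set.image_insert_eq, Set.image_singleton] using
      orbCount_sumCongr {(θ₁, θ₂), (σ₁, σ₂), (φ₁, φ₂)}
  rw [genus, hpair (θ₁, θ₂) (σ₁, σ₂), hpair (σ₁, σ₂) (φ₁, φ₂), hpair (θ₁, θ₂) (φ₁, φ₂), htriple]
  push_cast [genus]
  ring

theorem FPF.sumCongr (h₁ : FPF φ₁) (h₂ : FPF φ₂) : FPF (φ₁.sumCongr φ₂) := by
  refine fpf_iff.2 ?_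
  rintro (x | x)
  · simp [h₁.apply_apply, h₁.apply_ne]
  · simp [h₂.apply_apply, h₂.apply_ne]

theorem IsGraphEmb.sumCongr (h₁ : IsGraphEmb θ₁ σ₁ φ₁) (h₂ : IsGraphEmb θ₂ σ₂ φ₂) :
    IsGraphEmb (θ₁.sumCongr θ₂) (σ₁.sumCongr σ₂) (φ₁.sumCongr φ₂) := by
  obtain ⟨hθ₁, hσ₁, hφ₁, hcomm₁, hne₁⟩ := isGraphEmb_iff.1 h₁
  obtain ⟨hθ₂, hσ₂, hφ₂, hcomm₂, hne₂⟩ := isGraphEmb_iff.1 h₂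
  refine isGraphEmb_iff.2
    ⟨hθ₁.sumCongr hθ₂, hσ₁.sumCongr hσ₂, hφ₁.sumCongr hφ₂, fun x => ?_, fun x => ?_⟩
  · rcases x with x | x <;> simp [hcomm₁, hcomm₂]
  · rcases x with x | x <;> simp [hne₁, hne₂]

theorem inl_mem_orbSet_sumCongr {x y : F₁} (h : y ∈ orbSet {σ₁, φ₁} x) :
    Sum.inl y ∈ orbSet {σ₁.sumCongr σ₂, φ₁.sumCongr φ₂} (Sum.inl x) := by
  refine map_mem_orbSet ?_ h
  rintro s (rfl | rfl)
  exacts [⟨_, Or.inl rfl, fun _ => rfl⟩, ⟨_, Or.inr rfl, fun _ => rfl⟩]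

theorem inr_mem_orbSet_sumCongr {x y : F₂} (h : y ∈ orbSet {σ₂, φ₂} x) :
    Sum.inr y ∈ orbSet {σ₁.sumCongr σ₂, φ₁.sumCongr φ₂} (Sum.inr x) := by
  refine map_mem_orbSet ?_ h
  rintro s (rfl | rfl)
  exacts [⟨_, Or.inl rfl, fun _ => rfl⟩, ⟨_, Or.inr rfl, fun _ => rfl⟩]

theorem inr_notMem_orbSet_inl {S : Set (Equiv.Perm (F₁ ⊕ F₂))}
    (hS : ∀ s ∈ S, ∀ x, (s x).isLeft = x.isLeft) (x : F₁) (y : F₂) :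
    Sum.inr y ∉ orbSet S (Sum.inl x) := fun h =>
  Bool.false_ne_true (apply_eq_of_mem_orbSet hS h)

theorem isLeft_sumCongr (x : F₁ ⊕ F₂) : (φ₁.sumCongr φ₂ x).isLeft = x.isLeft := by
  rcases x with x | x <;> rfl

end Sum

section Splice

variable {F : Type*} [DecidableEq F] {θ σ φ : Equiv.Perm F} {a b : F}

/-- Surgery on a fixed-point-free involution: the pairs `{a, φ a}` and `{b, φ b}` are replaced by
`{b, φ a}` and `{a, φ b}`. Applied to the corner involution of an embedding it merges the vertices
at the flags `a` and `b`. -/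
def splice (φ : Equiv.Perm F) (a b : F) : Equiv.Perm F :=
  Equiv.swap a b * φ * Equiv.swap a b

theorem splice_apply (x : F) : splice φ a b x = Equiv.swap a b (φ (Equiv.swap a b x)) := rfl

theorem FPF.splice (hφ : FPF φ) : FPF (splice φ a b) := by
  refine fpf_iff.2 fun x => ⟨by simp [splice_apply, hφ.apply_apply], fun h => ?_⟩
  rw [splice_apply, Equiv.swap_apply_eq_iff] at h
  exact hφ.apply_ne _ h

theorem apply_splice {X : Type*} {h : F → X} (hφ : ∀ x, h (φ x) = h x) (hab : h a = h b) (x : F) :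
    h (splice φ a b x) = h x := by
  rw [splice_apply, Equiv.apply_swap_eq_self hab, hφ, Equiv.apply_swap_eq_self hab]

theorem splice_splice : splice (splice φ a b) a b = φ := by
  ext x
  simp [splice_apply]

-- The parity of `h` is tested on the `{σ, φ}`-orbit of `a`: there `h` is `φ`-invariant, except
-- possibly at `a` and `φ a`, because the orbit misses `b`.
theorem apply_eq_apply_of_splice [Finite F] (hσ : FPF σ) (hφ : FPF φ) (hb : b ∉ orbSet {σ, φ} a)
    {h : F → ZMod 2} (hhσ : ∀ x, h (σ x) = h x) (hh : ∀ x, h (splice φ a b x) = h x) :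
    h a = h b := by
  classical
  have hσm : ∀ x, σ x ∈ orbSet {σ, φ} a ↔ x ∈ orbSet {σ, φ} a := fun x =>
    apply_mem_orbSet_iff (Or.inl rfl)
  have hφm : ∀ x, φ x ∈ orbSet {σ, φ} a ↔ x ∈ orbSet {σ, φ} a := fun x =>
    apply_mem_orbSet_iff (Or.inr rfl)
  have hφa : φ a ≠ b := fun h => hb (h ▸ (hφm a).2 mem_orbSet_self)
  have hhb : h (φ a) = h b := by
    rw [← hh b, splice_apply, Equiv.swap_apply_right, Equiv.swap_apply_of_ne_of_ne (hφ.2 a) hφa]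
  have hcut : (orbSet {σ, φ} a).indicator h (φ a) = (orbSet {σ, φ} a).indicator h a := by
    refine hσ.apply_eq_of_forall_ne hφ (fun x => ?_) fun x hxa hxφa => ?_
    · simp only [Set.indicator_apply, hσm, hhσ]
    by_cases hx : x ∈ orbSet {σ, φ} a
    · have hxb : x ≠ b := fun h => hb (h ▸ hx)
      have hφxb : φ x ≠ b := fun h => hb (h ▸ (hφm x).2 hx)
      have hφxa : φ x ≠ a := fun h => hxφa (h ▸ (hφ.apply_apply x).symm)
      rw [Set.indicator_of_mem hx, Set.indicator_of_mem ((hφm x).2 hx), ← hh x, splice_apply,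
        Equiv.swap_apply_of_ne_of_ne hxa hxb, Equiv.swap_apply_of_ne_of_ne hφxa hφxb]
    · rw [Set.indicator_of_notMem hx, Set.indicator_of_notMem (mt (hφm x).1 hx)]
  rw [Set.indicator_of_mem mem_orbSet_self,
    Set.indicator_of_mem ((hφm a).2 mem_orbSet_self)] at hcut
  exact hcut.symm.trans hhb

theorem apply_eq_of_splice [Finite F] (hσ : FPF σ) (hφ : FPF φ) (hb : b ∉ orbSet {σ, φ} a)
    {h : F → ZMod 2} (hhσ : ∀ x, h (σ x) = h x) (hh : ∀ x, h (splice φ a b x) = h x) (x : F) :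
    h (φ x) = h x := by
  have := apply_splice hh (apply_eq_apply_of_splice hσ hφ hb hhσ hh) x
  rwa [splice_splice] at this

theorem orbCount_le_orbCount_splice_add_one [Finite F] (T : Set (Equiv.Perm F)) :
    orbCount (insert φ T) ≤ orbCount (insert (splice φ a b) T) + 1 := by
  let d : orbInvariants (insert φ T) →ₗ[ZMod 2] ZMod 2 :=
    (LinearMap.proj (R := ZMod 2) (φ := fun _ : F => ZMod 2) a - LinearMap.proj b).domRestrict _
  have hker : (LinearMap.ker d).map (orbInvariants (insert φ T)).subtype ≤
      orbInvariants (insert (splice φ a b) T) := by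
    rintro _ ⟨h, hd, rfl⟩ s (rfl | hs) x
    · exact apply_splice (h.2 φ (Set.mem_insert _ _)) (sub_eq_zero.1 (LinearMap.mem_ker.1 hd)) x
    · exact h.2 s (Set.mem_insert_of_mem _ hs) x
  have hker := Submodule.finrank_mono hker
  have hrange := (LinearMap.range d).finrank_le
  have hrank := d.finrank_range_add_finrank_ker
  rw [Submodule.finrank_map_subtype_eq, finrank_orbInvariants] at hker
  rw [finrank_orbInvariants] at hrank
  rw [Module.finrank_self] at hrange
  omega

theorem orbCount_splice_lt [Finite F] (hσ : FPF σ) (hφ : FPF φ) (hb : b ∉ orbSet {θ, σ, φ} a) :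
    orbCount {θ, σ, splice φ a b} < orbCount {θ, σ, φ} := by
  have hb' : b ∉ orbSet {σ, φ} a := fun h =>
    hb (map_mem_orbSet (g := id) (fun s hs => ⟨s, Or.inr hs, fun _ => rfl⟩) h)
  have hglue : ∀ h ∈ orbInvariants {θ, σ, splice φ a b}, h a = h b ∧ ∀ x, h (φ x) = h x :=
    fun h hh => ⟨apply_eq_apply_of_splice hσ hφ hb' (hh σ (by simp)) (hh _ (by simp)),
      apply_eq_of_splice hσ hφ hb' (hh σ (by simp)) (hh _ (by simp))⟩
  rw [← finrank_orbInvariants, ← finrank_orbInvariants]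
  refine Submodule.finrank_lt_finrank_of_lt (SetLike.lt_iff_le_and_exists.2
    ⟨fun h hh => ?_, _, indicator_orbSet_mem_orbInvariants (x := a), fun hind => ?_⟩)
  · rintro s (rfl | rfl | rfl)
    exacts [hh _ (by simp), hh _ (by simp), (hglue h hh).2]
  · simpa [mem_orbSet_self, hb] using (hglue _ hind).1

theorem genus_splice_le [Finite F] (hσ : FPF σ) (hφ : FPF φ) (hb : b ∉ orbSet {θ, σ, φ} a) :
    genus θ σ (splice φ a b) ≤ genus θ σ φ := by
  have hC := orbCount_splice_lt hσ hφ hb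
  have hV := orbCount_le_orbCount_splice_add_one (φ := φ) (a := a) (b := b) {σ}
  have hF := orbCount_le_orbCount_splice_add_one (φ := φ) (a := a) (b := b) {θ}
  rw [Set.pair_comm, Set.pair_comm _ σ] at hV
  rw [Set.pair_comm, Set.pair_comm _ θ] at hF
  unfold genus
  omega

end Splice

section Planar

variable {F F₁ F₂ W W' : Type*}

theorem Realizes.range_eq_support {θ σ φ : Equiv.Perm F} {H : SimpleGraph W} {p : F → W}
    (hR : Realizes θ σ φ H p) : Set.range p = H.support := by
  obtain ⟨-, -, hadj, -, hex, -⟩ := hR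
  ext w
  constructor
  · rintro ⟨f, rfl⟩
    exact ⟨_, hadj f⟩
  · rintro ⟨u, hu⟩
    exact (hex w u hu).imp fun f hf => hf.1

theorem Realizes.sup {θ₁ σ₁ φ₁ : Equiv.Perm F₁} {θ₂ σ₂ φ₂ : Equiv.Perm F₂}
    {H₁ H₂ : SimpleGraph W} {p₁ : F₁ → W} {p₂ : F₂ → W} {φ : Equiv.Perm (F₁ ⊕ F₂)}
    (hR₁ : Realizes θ₁ σ₁ φ₁ H₁ p₁) (hR₂ : Realizes θ₂ σ₂ φ₂ H₂ p₂)
    (hsep : (H₁.support ∩ H₂.support).Subsingleton)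
    (hφ : ∀ f, Sum.elim p₁ p₂ (φ f) = Sum.elim p₁ p₂ f)
    (htrans : ∀ f f', Sum.elim p₁ p₂ f = Sum.elim p₁ p₂ f' →
      f' ∈ orbSet {σ₁.sumCongr σ₂, φ} f) :
    Realizes (θ₁.sumCongr θ₂) (σ₁.sumCongr σ₂) φ (H₁ ⊔ H₂) (Sum.elim p₁ p₂) := by
  rw [← hR₁.range_eq_support, ← hR₂.range_eq_support] at hsep
  obtain ⟨hσ₁, -, hadj₁, -, hex₁, hedge₁⟩ := hR₁
  obtain ⟨hσ₂, -, hadj₂, -, hex₂, hedge₂⟩ := hR₂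
  have hmixed : ∀ f₁ f₂, p₁ f₁ = p₂ f₂ → p₁ (θ₁ f₁) ≠ p₂ (θ₂ f₂) := fun f₁ f₂ h h' =>
    (hadj₁ f₁).ne (hsep ⟨⟨f₁, rfl⟩, ⟨f₂, h.symm⟩⟩ ⟨⟨_, rfl⟩, ⟨_, h'.symm⟩⟩)
  refine ⟨?_, hφ, ?_, htrans, ?_, ?_⟩
  · rintro (f | f)
    exacts [hσ₁ f, hσ₂ f]
  · rintro (f | f)
    exacts [Or.inl (hadj₁ f), Or.inr (hadj₂ f)]
  · rintro u v (h | h)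
    · obtain ⟨f, hf⟩ := hex₁ u v h
      exact ⟨Sum.inl f, hf⟩
    · obtain ⟨f, hf⟩ := hex₂ u v h
      exact ⟨Sum.inr f, hf⟩
  · rintro (f | f) (f' | f') h h'
    · exact inl_mem_orbSet_sumCongr (hedge₁ f f' h h')
    · exact (hmixed f f' h h').elim
    · exact (hmixed f' f h.symm h'.symm).elim
    · exact inr_mem_orbSet_sumCongr (hedge₂ f f' h h')

theorem Realizes.sup_sumCongr {θ₁ σ₁ φ₁ : Equiv.Perm F₁} {θ₂ σ₂ φ₂ : Equiv.Perm F₂}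
    {H₁ H₂ : SimpleGraph W} {p₁ : F₁ → W} {p₂ : F₂ → W}
    (hR₁ : Realizes θ₁ σ₁ φ₁ H₁ p₁) (hR₂ : Realizes θ₂ σ₂ φ₂ H₂ p₂)
    (hsep : Disjoint H₁.support H₂.support) :
    Realizes (θ₁.sumCongr θ₂) (σ₁.sumCongr σ₂) (φ₁.sumCongr φ₂) (H₁ ⊔ H₂) (Sum.elim p₁ p₂) := by
  have hne : ∀ f₁ f₂, p₁ f₁ ≠ p₂ f₂ := fun f₁ f₂ => by
    rw [← hR₁.range_eq_support, ← hR₂.range_eq_support] at hsep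
    exact hsep.ne_of_mem ⟨f₁, rfl⟩ ⟨f₂, rfl⟩
  refine hR₁.sup hR₂ (by simp [hsep.inter_eq]) ?_ ?_
  · rintro (f | f)
    exacts [hR₁.2.1 f, hR₂.2.1 f]
  · rintro (f | f) (f' | f') h
    · exact inl_mem_orbSet_sumCongr (hR₁.2.2.2.1 f f' h)
    · exact (hne f f' h).elim
    · exact (hne f' f h.symm).elim
    · exact inr_mem_orbSet_sumCongr (hR₂.2.2.2.1 f f' h)

theorem Realizes.sup_splice [DecidableEq (F₁ ⊕ F₂)] [Finite F₁] [Finite F₂]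
    {θ₁ σ₁ φ₁ : Equiv.Perm F₁} {θ₂ σ₂ φ₂ : Equiv.Perm F₂}
    {H₁ H₂ : SimpleGraph W} {p₁ : F₁ → W} {p₂ : F₂ → W} {a : F₁} {b : F₂}
    (hR₁ : Realizes θ₁ σ₁ φ₁ H₁ p₁) (hR₂ : Realizes θ₂ σ₂ φ₂ H₂ p₂)
    (hσ₁ : FPF σ₁) (hσ₂ : FPF σ₂) (hφ₁ : FPF φ₁) (hφ₂ : FPF φ₂)
    (hsep : (H₁.support ∩ H₂.support).Subsingleton) (hab : p₁ a = p₂ b) :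
    Realizes (θ₁.sumCongr θ₂) (σ₁.sumCongr σ₂)
      (splice (φ₁.sumCongr φ₂) (Sum.inl a) (Sum.inr b)) (H₁ ⊔ H₂) (Sum.elim p₁ p₂) := by
  have hφ := hφ₁.sumCongr hφ₂
  have hb : Sum.inr b ∉ orbSet {σ₁.sumCongr σ₂, φ₁.sumCongr φ₂} (Sum.inl a) :=
    inr_notMem_orbSet_inl (by rintro s (rfl | rfl) <;> exact isLeft_sumCongr) a b
  refine hR₁.sup hR₂ hsep (fun f => ?_) fun f f' h => ?_
  · refine apply_splice ?_ hab f
    rintro (f | f)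
    exacts [hR₁.2.1 f, hR₂.2.1 f]
  refine mem_orbSet_iff_forall_orbInvariants.2 fun k hk => ?_
  have hkσ := hk _ (Or.inl rfl)
  have hkab := apply_eq_apply_of_splice (hσ₁.sumCongr hσ₂) hφ hb hkσ (hk _ (Or.inr rfl))
  have hk' : k ∈ orbInvariants {σ₁.sumCongr σ₂, φ₁.sumCongr φ₂} := by
    rintro s (rfl | rfl)
    exacts [hkσ, apply_eq_of_splice (hσ₁.sumCongr hσ₂) hφ hb hkσ (hk _ (Or.inr rfl))]
  have hk₁ : ∀ f f', p₁ f = p₁ f' → k (Sum.inl f') = k (Sum.inl f) := fun f f' h =>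
    apply_eq_of_mem_orbSet hk' (inl_mem_orbSet_sumCongr (hR₁.2.2.2.1 f f' h))
  have hk₂ : ∀ f f', p₂ f = p₂ f' → k (Sum.inr f') = k (Sum.inr f) := fun f f' h =>
    apply_eq_of_mem_orbSet hk' (inr_mem_orbSet_sumCongr (hR₂.2.2.2.1 f f' h))
  have hmixed : ∀ f₁ f₂, p₁ f₁ = p₂ f₂ → k (Sum.inl f₁) = k (Sum.inr f₂) := fun f₁ f₂ h => by
    rw [← hR₁.range_eq_support, ← hR₂.range_eq_support] at hsep
    have hv : p₁ f₁ = p₁ a := hsep ⟨⟨f₁, rfl⟩, ⟨f₂, h.symm⟩⟩ ⟨⟨a, rfl⟩, ⟨b, hab.symm⟩⟩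
    rw [hk₁ _ _ hv.symm, hkab, hk₂ _ _ (h.symm.trans (hv.trans hab))]
  rcases f with f | f <;> rcases f' with f' | f'
  exacts [hk₁ f f' h, (hmixed f f' h).symm, hmixed f' f h.symm, hk₂ f f' h]

theorem IsPlanarG.sup {H₁ H₂ : SimpleGraph W} (h₁ : IsPlanarG H₁) (h₂ : IsPlanarG H₂)
    (hsep : (H₁.support ∩ H₂.support).Subsingleton) : IsPlanarG (H₁ ⊔ H₂) := by
  classical
  obtain ⟨F₁, _, θ₁, σ₁, φ₁, p₁, hE₁, hR₁, hg₁⟩ := h₁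
  obtain ⟨F₂, _, θ₂, σ₂, φ₂, p₂, hE₂, hR₂, hg₂⟩ := h₂
  have hE := hE₁.sumCongr hE₂
  have hg : genus (θ₁.sumCongr θ₂) (σ₁.sumCongr σ₂) (φ₁.sumCongr φ₂) ≤ 0 := by
    rw [genus_sumCongr]
    exact add_nonpos hg₁ hg₂
  by_cases hdisj : Disjoint H₁.support H₂.support
  · exact ⟨F₁ ⊕ F₂, inferInstance, _, _, _, _, hE, hR₁.sup_sumCongr hR₂ hdisj, hg⟩
  obtain ⟨v, hv₁, hv₂⟩ := Set.not_disjoint_iff.1 hdisj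
  rw [← hR₁.range_eq_support] at hv₁
  rw [← hR₂.range_eq_support] at hv₂
  obtain ⟨a, rfl⟩ := hv₁
  obtain ⟨b, hb⟩ := hv₂
  refine ⟨F₁ ⊕ F₂, inferInstance, _, _, _, _, ⟨hE.1, hE.2.1, hE.2.2.1.splice, hE.2.2.2⟩,
    hR₁.sup_splice hR₂ hE₁.2.1 hE₂.2.1 hE₁.2.2.1 hE₂.2.2.1 hsep hb.symm,
    (genus_splice_le hE.2.1 hE.2.2.1 (inr_notMem_orbSet_inl ?_ a b)).trans hg⟩
  rintro s (rfl | rfl | rfl) <;> exact isLeft_sumCongr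

theorem isPlanarG_bot : IsPlanarG (⊥ : SimpleGraph W) := by
  refine ⟨Empty, inferInstance, 1, 1, 1, Empty.elim,
    ⟨⟨one_mul 1, nofun⟩, ⟨one_mul 1, nofun⟩, ⟨one_mul 1, nofun⟩, nofun⟩,
    ⟨nofun, nofun, nofun, nofun, nofun, nofun⟩, ?_⟩
  simp [genus, orbCount]

theorem isPlanarG_iSup {ι : Type*} [Finite ι] {H : ι → SimpleGraph W}
    (hH : ∀ i, IsPlanarG (H i))
    (hsep : ∀ i, ((H i).support ∩ ⋃ j ≠ i, (H j).support).Subsingleton) :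
    IsPlanarG (⨆ i, H i) := by
  classical
  have := Fintype.ofFinite ι
  rw [← Finset.sup_univ_eq_iSup]
  induction (Finset.univ : Finset ι) using Finset.induction_on with
  | empty => exact isPlanarG_bot
  | insert i s hi ih =>
    rw [Finset.sup_insert]
    refine (hH i).sup ih ((hsep i).anti (Set.inter_subset_inter_right _ ?_))
    rintro v ⟨w, hvw⟩
    rw [Finset.sup_eq_iSup] at hvw
    simp only [SimpleGraph.iSup_adj] at hvw
    obtain ⟨j, hj, hvw⟩ := hvw
    exact Set.mem_biUnion (fun h : j = i => hi (h ▸ hj)) ⟨w, hvw⟩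

theorem IsPlanarG.map {H : SimpleGraph W} (hH : IsPlanarG H) (g : W ↪ W') :
    IsPlanarG (H.map g) := by
  obtain ⟨F, _, θ, σ, φ, p, hE, ⟨hσ, hφ, hadj, hvert, hex, hedge⟩, hg⟩ := hH
  refine ⟨F, inferInstance, θ, σ, φ, g ∘ p, hE, ⟨fun f => congrArg g (hσ f),
    fun f => congrArg g (hφ f), fun f => SimpleGraph.map_adj_apply.2 (hadj f),
    fun f f' h => hvert f f' (g.injective h), ?_,
    fun f f' h h' => hedge f f' (g.injective h) (g.injective h')⟩, hg⟩
  intro u' v' huv'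
  obtain ⟨u, v, huv, rfl, rfl⟩ := (SimpleGraph.map_adj g H u' v').1 huv'
  obtain ⟨f, rfl, rfl⟩ := hex u v huv
  exact ⟨f, rfl, rfl⟩

end Planar

section CompleteGraphs

variable {W X F Γ : Type*}

theorem Realizes.orbCount_le_one_of_top [Finite F] {θ σ φ : Equiv.Perm F} {p : F → W}
    (hR : Realizes θ σ φ ⊤ p) : orbCount {θ, σ, φ} ≤ 1 := by
  obtain ⟨-, -, -, hvert, hex, -⟩ := hR
  have hfib : ∀ f f', p f = p f' → f' ∈ orbSet {θ, σ, φ} f := fun f f' h =>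
    map_mem_orbSet (g := id) (fun s hs => ⟨s, Or.inr hs, fun _ => rfl⟩) (hvert f f' h)
  have htrans : ∀ f f', f' ∈ orbSet {θ, σ, φ} f := fun f f' => by
    by_cases h : p f = p f'
    · exact hfib f f' h
    obtain ⟨g, hg, hg'⟩ := hex _ _ h
    rw [← orbSet_eq_of_mem (hfib f g hg.symm),
      ← orbSet_eq_of_mem (apply_mem_orbSet (Or.inl rfl) mem_orbSet_self)]
    exact hfib _ _ hg'
  have : Subsingleton (MulAction.orbitRel.Quotient (Subgroup.closure {θ, σ, φ}) F) :=
    ⟨fun a b => Quotient.inductionOn₂ a b fun f f' => Quotient.sound (htrans f' f)⟩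
  exact Finite.card_le_one_iff_subsingleton.2 this

theorem Realizes.genus_nonpos_of_top [Finite F] [Nontrivial W]
    {θ σ φ : Equiv.Perm F} {p : F → W} {q : F → X} (hR : Realizes θ σ φ ⊤ p)
    (hE : IsGraphEmb θ σ φ) (hqθ : ∀ f, q (θ f) = q f) (hqφ : ∀ f, q (φ f) = q f)
    (hq : Function.Surjective q) (hcard : Nat.card F + 8 ≤ 4 * (Nat.card W + Nat.card X)) :
    genus θ σ φ ≤ 0 := by
  have hV : Nat.card W ≤ orbCount {σ, φ} := by
    rw [← Set.ncard_univ, ← SimpleGraph.support_top_of_nontrivial, ← hR.range_eq_support]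
    refine ncard_range_le_orbCount ?_
    rintro s (rfl | rfl)
    exacts [hR.1, hR.2.1]
  have hF : Nat.card X ≤ orbCount {θ, φ} := by
    rw [← Set.ncard_univ, ← hq.range_eq]
    refine ncard_range_le_orbCount ?_
    rintro s (rfl | rfl)
    exacts [hqθ, hqφ]
  have hC := hR.orbCount_le_one_of_top
  have hedges := mul_orbCount_eq_card hE.2.2.2
  unfold genus
  omega

section MulRight

variable [Group Γ] {t s c : Γ}

theorem fpf_mulRight (h : t * t = 1) (h' : t ≠ 1) : FPF (Equiv.mulRight t) :=
  fpf_iff.2 fun g => by simp [mul_assoc, h, h']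

theorem isGraphEmb_mulRight (ht : t * t = 1) (hs : s * s = 1) (hc : c * c = 1) (ht1 : t ≠ 1)
    (hs1 : s ≠ 1) (hc1 : c ≠ 1) (hts : s * t = t * s) (hne : t ≠ s) :
    IsGraphEmb (Equiv.mulRight t) (Equiv.mulRight s) (Equiv.mulRight c) :=
  isGraphEmb_iff.2 ⟨fpf_mulRight ht ht1, fpf_mulRight hs hs1, fpf_mulRight hc hc1,
    fun g => by simp [mul_assoc, hts], fun g => by simp [hne]⟩

theorem mul_mem_orbSet_mulRight {k : Γ} (hk : k ∈ Subgroup.closure {t, s}) (g : Γ) :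
    g * k ∈ orbSet {Equiv.mulRight t, Equiv.mulRight s} g := by
  induction hk using Subgroup.closure_induction generalizing g with
  | mem u hu =>
    refine apply_mem_orbSet (s := Equiv.mulRight u) ?_ mem_orbSet_self
    exact hu.imp (congrArg Equiv.mulRight) (congrArg Equiv.mulRight)
  | one => simpa only [mul_one] using mem_orbSet_self
  | mul a b _ _ ha hb => simpa only [← mul_assoc, orbSet_eq_of_mem (ha g)] using hb (g * a)
  | inv a _ ha => exact mem_orbSet_comm.1 (by simpa only [inv_mul_cancel_right] using ha (g * a⁻¹))

theorem realizes_top_mulRight (ρ : Γ →* Equiv.Perm W) {u v : W} (huv : u ≠ v) (ht : ρ t u = v)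
    (hs : ρ s u = u) (hc : ρ c u = u) (hex : ∀ i j, i ≠ j → ∃ g, ρ g u = i ∧ ρ g v = j)
    (hvert : ∀ k, ρ k u = u → k ∈ Subgroup.closure {s, c})
    (hedge : ∀ k, ρ k u = u → ρ k v = v → k ∈ Subgroup.closure {t, s}) :
    Realizes (Equiv.mulRight t) (Equiv.mulRight s) (Equiv.mulRight c) ⊤ (ρ · u) := by
  have hmul : ∀ g k w, ρ (g * k) w = ρ g (ρ k w) := fun g k w => by
    rw [map_mul, Equiv.Perm.mul_apply]
  have hθ : ∀ g, ρ (g * t) u = ρ g v := fun g => by rw [hmul, ht]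
  have hdiv : ∀ g g' w, ρ g w = ρ g' w → ρ (g⁻¹ * g') w = w := fun g g' w h => by
    rw [hmul, ← h, ← hmul, inv_mul_cancel, map_one, Equiv.Perm.one_apply]
  refine ⟨fun g => ?_, fun g => ?_, fun g => ?_, fun g g' h => ?_, fun i j hij => ?_,
    fun g g' h h' => ?_⟩
  · exact (hmul g s u).trans (congrArg (ρ g) hs)
  · exact (hmul g c u).trans (congrArg (ρ g) hc)
  · exact ((ρ g).injective.ne huv).trans_eq (hθ g).symm
  · simpa using mul_mem_orbSet_mulRight (hvert _ (hdiv g g' u h)) g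
  · exact (hex i j hij).imp fun g hg => ⟨hg.1, (hθ g).trans hg.2⟩
  · simp only [Equiv.coe_mulRight, hθ] at h'
    simpa using mul_mem_orbSet_mulRight (hedge _ (hdiv g g' u h) (hdiv g g' v h')) g

end MulRight

-- The flags of the tetrahedron are the bijections from `Fin 4` onto its vertices: vertex, other
-- end of the edge, third vertex of the face, vertex opposite the face.
theorem isPlanarG_top_fin_four : IsPlanarG (⊤ : SimpleGraph (Fin 4)) := by
  let t : Equiv.Perm (Fin 4) := Equiv.swap 0 1
  let s : Equiv.Perm (Fin 4) := Equiv.swap 2 3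
  let c : Equiv.Perm (Fin 4) := Equiv.swap 1 2
  have hE : IsGraphEmb (Equiv.mulRight t) (Equiv.mulRight s) (Equiv.mulRight c) := by
    apply isGraphEmb_mulRight <;> decide
  have hR : Realizes (Equiv.mulRight t) (Equiv.mulRight s) (Equiv.mulRight c) ⊤ (fun g => g 0) := by
    refine realizes_top_mulRight (MonoidHom.id _) zero_ne_one rfl rfl rfl (by decide)
      (fun k hk => ?_) (fun k hk hk' => ?_)
    · have hwords : ∀ k : Equiv.Perm (Fin 4), k 0 = 0 →
          k = 1 ∨ k = s ∨ k = c ∨ k = s * c ∨ k = c * s ∨ k = s * c * s := by decide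
      have hs : s ∈ Subgroup.closure {s, c} := Subgroup.mem_closure_of_mem (Or.inl rfl)
      have hc : c ∈ Subgroup.closure {s, c} := Subgroup.mem_closure_of_mem (Or.inr rfl)
      rcases hwords k hk with rfl | rfl | rfl | rfl | rfl | rfl
      exacts [one_mem _, hs, hc, mul_mem hs hc, mul_mem hc hs, mul_mem (mul_mem hs hc) hs]
    · have hwords : ∀ k : Equiv.Perm (Fin 4), k 0 = 0 → k 1 = 1 → k = 1 ∨ k = s := by decide
      rcases hwords k hk hk' with rfl | rfl
      exacts [one_mem _, Subgroup.mem_closure_of_mem (Or.inr rfl)]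
  refine ⟨_, inferInstance, _, _, _, _, hE, hR, hR.genus_nonpos_of_top (q := fun g => g 3) hE
    (fun g => rfl) (fun g => rfl) (fun i => ⟨Equiv.swap 3 i, Equiv.swap_apply_left _ _⟩) ?_⟩
  simp [Fintype.card_perm, Nat.factorial]

-- The flags of the triangle are the bijections from `Fin 3` onto its vertices, together with the
-- side of the plane.
theorem isPlanarG_top_fin_three : IsPlanarG (⊤ : SimpleGraph (Fin 3)) := by
  let t : Equiv.Perm (Fin 3) × ℤˣ := (Equiv.swap 0 1, 1)
  let s : Equiv.Perm (Fin 3) × ℤˣ := (1, -1)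
  let c : Equiv.Perm (Fin 3) × ℤˣ := (Equiv.swap 1 2, 1)
  have hE : IsGraphEmb (Equiv.mulRight t) (Equiv.mulRight s) (Equiv.mulRight c) := by
    apply isGraphEmb_mulRight <;> decide
  have hR : Realizes (Equiv.mulRight t) (Equiv.mulRight s) (Equiv.mulRight c) ⊤
      (fun g => g.1 0) := by
    refine realizes_top_mulRight (MonoidHom.fst _ ℤˣ) zero_ne_one rfl rfl rfl (by decide)
      (fun k hk => ?_) (fun k hk hk' => ?_)
    · have hwords : ∀ k : Equiv.Perm (Fin 3) × ℤˣ, k.1 0 = 0 →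
          k = 1 ∨ k = s ∨ k = c ∨ k = s * c := by decide
      have hs : s ∈ Subgroup.closure {s, c} := Subgroup.mem_closure_of_mem (Or.inl rfl)
      have hc : c ∈ Subgroup.closure {s, c} := Subgroup.mem_closure_of_mem (Or.inr rfl)
      rcases hwords k hk with rfl | rfl | rfl | rfl
      exacts [one_mem _, hs, hc, mul_mem hs hc]
    · have hwords : ∀ k : Equiv.Perm (Fin 3) × ℤˣ, k.1 0 = 0 → k.1 1 = 1 → k = 1 ∨ k = s := by
        decide
      rcases hwords k hk hk' with rfl | rfl
      exacts [one_mem _, Subgroup.mem_closure_of_mem (Or.inr rfl)]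
  refine ⟨_, inferInstance, _, _, _, _, hE, hR, hR.genus_nonpos_of_top (q := fun g => g.2) hE
    (fun g => mul_one _) (fun g => mul_one _) (fun e => ⟨(1, e), rfl⟩) ?_⟩
  simp [Fintype.card_perm, Nat.factorial]

theorem isPlanarG_spanningCoe_top {T : Set W} (hT : T.ncard = 3 ∨ T.ncard = 4) :
    IsPlanarG (⊤ : SimpleGraph T).spanningCoe := by
  have : Finite T := Set.finite_coe_iff.2 (Set.finite_of_ncard_ne_zero (by omega))
  have htransport : ∀ n, IsPlanarG (⊤ : SimpleGraph (Fin n)) → T.ncard = n →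
      IsPlanarG (⊤ : SimpleGraph T).spanningCoe := fun n hn h => by
    let e : Fin n ≃ T := (Finite.equivFinOfCardEq h).symm
    have htop : (⊤ : SimpleGraph (Fin n)).map e = (⊤ : SimpleGraph T) := by
      ext u v
      exact ⟨SimpleGraph.Adj.ne, fun huv => (SimpleGraph.map_adj e.toEmbedding ⊤ u v).2
        ⟨e.symm u, e.symm v, e.symm.injective.ne huv, by simp, by simp⟩⟩
    rw [← htop]
    exact (hn.map e.toEmbedding).map (Function.Embedding.subtype _)
  exact hT.elim (htransport 3 isPlanarG_top_fin_three) (htransport 4 isPlanarG_top_fin_four)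

theorem spanningCoe_top_adj {T : Set W} {u v : W} :
    (⊤ : SimpleGraph T).spanningCoe.Adj u v ↔ u ≠ v ∧ u ∈ T ∧ v ∈ T := by
  constructor
  · rintro ⟨-, x, y, hxy, rfl, rfl⟩
    exact ⟨Subtype.val_injective.ne hxy.ne, x.2, y.2⟩
  · rintro ⟨hne, hu, hv⟩
    exact (SimpleGraph.map_adj _ _ _ _).2
      ⟨⟨u, hu⟩, ⟨v, hv⟩, ne_of_apply_ne Subtype.val hne, rfl, rfl⟩

theorem support_spanningCoe_top_subset {T : Set W} :
    (⊤ : SimpleGraph T).spanningCoe.support ⊆ T := by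
  rw [SimpleGraph.support_spanningCoe]
  exact Subtype.coe_image_subset _ _

end CompleteGraphs

section SubgraphEuler

variable {F : Type*} {θ σ φ : Equiv.Perm F} {M : Set F}

open Classical in
/-- The permutation that agrees with `π` on the `π`-invariant set `A` and fixes all other points.
Restricting the involutions of an embedding in this way describes its subgraphs on the same set of
flags. -/
noncomputable def restrictPerm (π : Equiv.Perm F) (A : Set F) (hA : ∀ x, π x ∈ A ↔ x ∈ A) :
    Equiv.Perm F :=
  Equiv.Perm.ofSubtype (π.subtypePerm hA)

theorem restrictPerm_apply_of_mem {π : Equiv.Perm F} {A : Set F} (hA : ∀ x, π x ∈ A ↔ x ∈ A)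
    {x : F} (hx : x ∈ A) : restrictPerm π A hA x = π x := by
  classical
  exact Equiv.Perm.ofSubtype_apply_of_mem _ hx

theorem restrictPerm_apply_of_notMem {π : Equiv.Perm F} {A : Set F} (hA : ∀ x, π x ∈ A ↔ x ∈ A)
    {x : F} (hx : x ∉ A) : restrictPerm π A hA x = x := by
  classical
  exact Equiv.Perm.ofSubtype_apply_of_not_mem _ hx

theorem IsGraphEmb.apply_comm (hE : IsGraphEmb θ σ φ) (x : F) : θ (σ x) = σ (θ x) :=
  (isGraphEmb_iff.1 hE).2.2.2.1 x

theorem IsGraphEmb.card_orbSet_restrictPerm (hE : IsGraphEmb θ σ φ)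
    (hMθ : ∀ x, θ x ∈ M ↔ x ∈ M) (hMσ : ∀ x, σ x ∈ Mᶜ ↔ x ∈ Mᶜ) (x : F) :
    (x ∈ M → Nat.card (orbSet {θ, restrictPerm σ Mᶜ hMσ} x) = 2) ∧
      (x ∉ M → Nat.card (orbSet {θ, restrictPerm σ Mᶜ hMσ} x) = 4) := by
  have hon : ∀ {y}, y ∈ M → restrictPerm σ Mᶜ hMσ y = y := fun hy =>
    restrictPerm_apply_of_notMem hMσ (Set.notMem_compl_iff.2 hy)
  have hoff : ∀ {y}, y ∉ M → restrictPerm σ Mᶜ hMσ y = σ y := fun hy =>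
    restrictPerm_apply_of_mem hMσ hy
  have hθθ := hE.1.apply_apply
  have hσσ := hE.2.1.apply_apply
  have horb : orbSet {θ, restrictPerm σ Mᶜ hMσ} x = {x, restrictPerm σ Mᶜ hMσ x, θ x,
      restrictPerm σ Mᶜ hMσ (θ x)} := by
    refine orbSet_pair_eq hθθ (fun y => ?_) fun y => ?_ <;> by_cases hy : y ∈ M
    · rw [hon hy, hon hy]
    · rw [hoff hy, hoff ((hMσ y).2 hy), hσσ]
    · rw [hon hy, hon ((hMθ y).2 hy)]
    · rw [hoff hy, hoff (mt (hMθ y).1 hy), hE.apply_comm]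
  refine ⟨fun hx => ?_, fun hx => ?_⟩
  · rw [horb, hon hx, hon ((hMθ x).2 hx), Nat.card_coe_set_eq, Set.pair_eq_singleton,
      Set.insert_idem, Set.ncard_pair (hE.1.apply_ne x).symm]
  · rw [horb, hoff hx, hoff (mt (hMθ x).1 hx), ← orbSet_pair_eq hθθ hσσ hE.apply_comm]
    exact hE.2.2.2 x

theorem IsGraphEmb.four_mul_orbCount_restrictPerm [Finite F] (hE : IsGraphEmb θ σ φ)
    (hMθ : ∀ x, θ x ∈ M ↔ x ∈ M) (hMσ : ∀ x, σ x ∈ Mᶜ ↔ x ∈ Mᶜ) :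
    4 * orbCount {θ, restrictPerm σ Mᶜ hMσ} = Nat.card F + M.ncard := by
  classical
  have := Fintype.ofFinite F
  have hterm : ∀ x, (4 : ℚ) * (Nat.card (orbSet {θ, restrictPerm σ Mᶜ hMσ} x) : ℚ)⁻¹ =
      1 + if x ∈ M then 1 else 0 := fun x => by
    obtain ⟨hon, hoff⟩ := hE.card_orbSet_restrictPerm hMθ hMσ x
    by_cases hx : x ∈ M
    · rw [hon hx, if_pos hx]
      norm_num
    · rw [hoff hx, if_neg hx]
      norm_num
  have h : (4 * orbCount {θ, restrictPerm σ Mᶜ hMσ} : ℚ) = Nat.card F + M.ncard := by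
    rw [orbCount_eq_sum_inv_card, Finset.mul_sum, Finset.sum_congr rfl fun x _ => hterm x,
      Finset.sum_add_distrib, Finset.sum_boole, Set.ncard_eq_toFinset_card' M]
    simp [Set.toFinset]
  exact_mod_cast h

theorem finrank_add_finrank_le_of_dotProduct_eq_zero {K : Type*} [Field K] [Fintype F]
    {A B : Submodule K (F → K)} (h : ∀ a ∈ A, ∀ b ∈ B, a ⬝ᵥ b = 0) :
    Module.finrank K A + Module.finrank K B ≤ Fintype.card F := by
  classical
  have hle : B.map (dotProductEquiv K F).toLinearMap ≤ A.dualAnnihilator := by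
    rintro _ ⟨b, hb, rfl⟩
    exact (Submodule.mem_dualAnnihilator _).2 fun a ha => (dotProduct_comm b a).trans (h a ha b hb)
  have hB := Submodule.finrank_mono hle
  rw [LinearEquiv.finrank_map_eq] at hB
  have hA := Subspace.finrank_add_finrank_dualAnnihilator_eq A
  rw [Module.finrank_fintype_fun_eq_card] at hA
  omega

theorem IsGraphEmb.sum_mul_eq_zero_of_restrictPerm [Fintype F] (hE : IsGraphEmb θ σ φ)
    (hMθ : ∀ x, θ x ∈ M ↔ x ∈ M) (hMσ : ∀ x, σ x ∈ Mᶜ ↔ x ∈ Mᶜ) {g h : F → ZMod 2}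
    (hg : g ∈ orbInvariants {σ, φ, restrictPerm θ M hMθ})
    (hh : h ∈ orbInvariants {θ, restrictPerm σ Mᶜ hMσ}) : ∑ x, g x * h x = 0 := by
  classical
  have hgθ : ∀ x ∈ M, g (θ x) = g x := fun x hx => by
    rw [← restrictPerm_apply_of_mem hMθ hx]
    exact hg _ (by simp) x
  have hhσ : ∀ x ∈ Mᶜ, h (σ x) = h x := fun x hx => by
    rw [← restrictPerm_apply_of_mem hMσ hx]
    exact hh _ (by simp) x
  have hon : ∑ x, M.indicator (fun x => g x * h x) x = 0 := by
    refine hE.1.sum_eq_zero fun x => ?_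
    by_cases hx : x ∈ M
    · rw [Set.indicator_of_mem hx, Set.indicator_of_mem ((hMθ x).2 hx), hgθ x hx,
        hh θ (by simp)]
    · rw [Set.indicator_of_notMem hx, Set.indicator_of_notMem (mt (hMθ x).1 hx)]
  have hoff : ∑ x, Mᶜ.indicator (fun x => g x * h x) x = 0 := by
    refine hE.2.1.sum_eq_zero fun x => ?_
    by_cases hx : x ∈ Mᶜ
    · rw [Set.indicator_of_mem hx, Set.indicator_of_mem ((hMσ x).2 hx), hhσ x hx,
        hg σ (by simp)]
    · rw [Set.indicator_of_notMem hx, Set.indicator_of_notMem (mt (hMσ x).1 hx)]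
  rw [← Set.indicator_self_add_compl M fun x => g x * h x]
  simp only [Pi.add_apply, Finset.sum_add_distrib, hon, hoff, add_zero]

-- The sum of the vertex and face spaces is orthogonal to the sum of the corner and edge spaces, so
-- their dimensions add up to at most the number of flags.
theorem IsGraphEmb.orbCount_restrictPerm_add_le [Finite F] (hE : IsGraphEmb θ σ φ)
    (hMθ : ∀ x, θ x ∈ M ↔ x ∈ M) (hMσ : ∀ x, σ x ∈ Mᶜ ↔ x ∈ Mᶜ) :
    orbCount {σ, φ, restrictPerm θ M hMθ} + orbCount {θ, φ} + orbCount {φ} +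
        orbCount {θ, restrictPerm σ Mᶜ hMσ} ≤
      Nat.card F + orbCount {θ, σ, φ} + orbCount {θ, φ, restrictPerm σ Mᶜ hMσ} := by
  have := Fintype.ofFinite F
  simp only [← finrank_orbInvariants, Nat.card_eq_fintype_card]
  set X := orbInvariants {σ, φ, restrictPerm θ M hMθ}
  set Y := orbInvariants {θ, φ}
  set P := orbInvariants {φ}
  set L := orbInvariants {θ, restrictPerm σ Mᶜ hMσ}
  have hXY : X ⊓ Y ≤ orbInvariants {θ, σ, φ} := fun h hh => by
    rintro s (rfl | rfl | rfl)
    exacts [hh.2 _ (by simp), hh.1 _ (by simp), hh.2 _ (by simp)]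
  have hPL : P ⊓ L ≤ orbInvariants {θ, φ, restrictPerm σ Mᶜ hMσ} := fun h hh => by
    rintro s (rfl | rfl | rfl)
    exacts [hh.2 _ (by simp), hh.1 _ (by simp), hh.2 _ (by simp)]
  have hφ : ∀ g h : F → ZMod 2, (∀ x, g (φ x) = g x) → (∀ x, h (φ x) = h x) →
      ∑ x, g x * h x = 0 := fun g h hg hh =>
    hE.2.2.1.sum_eq_zero fun x => by rw [hg, hh]
  have hθ : ∀ g h : F → ZMod 2, (∀ x, g (θ x) = g x) → (∀ x, h (θ x) = h x) →
      ∑ x, g x * h x = 0 := fun g h hg hh => hE.1.sum_eq_zero fun x => by rw [hg, hh]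
  have horth : ∀ a ∈ X ⊔ Y, ∀ b ∈ P ⊔ L, a ⬝ᵥ b = 0 := by
    intro a ha b hb
    obtain ⟨x, hx, y, hy, rfl⟩ := Submodule.mem_sup.1 ha
    obtain ⟨p, hp, l, hl, rfl⟩ := Submodule.mem_sup.1 hb
    have hxp : x ⬝ᵥ p = 0 := hφ x p (hx _ (by simp)) (hp _ (by simp))
    have hxl : x ⬝ᵥ l = 0 := hE.sum_mul_eq_zero_of_restrictPerm hMθ hMσ hx hl
    have hyp : y ⬝ᵥ p = 0 := hφ y p (hy _ (by simp)) (hp _ (by simp))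
    have hyl : y ⬝ᵥ l = 0 := hθ y l (hy _ (by simp)) (hl _ (by simp))
    rw [add_dotProduct, dotProduct_add, dotProduct_add, hxp, hxl, hyp, hyl, add_zero, add_zero]
  have hdim := finrank_add_finrank_le_of_dotProduct_eq_zero horth
  have hXYdim := Submodule.finrank_sup_add_finrank_inf_eq X Y
  have hPLdim := Submodule.finrank_sup_add_finrank_inf_eq P L
  have hXYle := Submodule.finrank_mono hXY
  have hPLle := Submodule.finrank_mono hPL
  omega

theorem IsGraphEmb.orbCount_restrictPerm_add_le_of_genus_nonpos [Finite F]
    (hE : IsGraphEmb θ σ φ) (hg : genus θ σ φ ≤ 0)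
    (hMθ : ∀ x, θ x ∈ M ↔ x ∈ M) (hMσ : ∀ x, σ x ∈ Mᶜ ↔ x ∈ Mᶜ) :
    4 * orbCount {σ, φ, restrictPerm θ M hMθ} + M.ncard + 4 * orbCount {θ, σ, φ} ≤
      4 * orbCount {σ, φ} + 4 * orbCount {θ, φ, restrictPerm σ Mᶜ hMσ} := by
  have hEuler := hE.orbCount_restrictPerm_add_le hMθ hMσ
  have hcorners := mul_orbCount_eq_card hE.2.2.1.card_orbSet_singleton
  have hflags := hE.four_mul_orbCount_restrictPerm hMθ hMσ
  have hedges := mul_orbCount_eq_card hE.2.2.2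
  unfold genus at hg
  omega

end SubgraphEuler

section FaceBoundaries

variable {F W : Type*} {θ σ φ : Equiv.Perm F} {H : SimpleGraph W} {p : F → W} {h : F → ZMod 2}

theorem finrank_range_lt_of_map_one_eq_zero {K ι E : Type*} [Field K] [AddCommGroup E] [Module K E]
    [Finite ι] [DecidableEq ι] {L : (ι → K) →ₗ[K] E} (hL : L 1 = 0) {i₀ : ι}
    (hi₀ : L (Pi.single i₀ 1) ≠ 0) :
    Module.finrank K (LinearMap.range L) < {i | L (Pi.single i 1) ≠ 0}.ncard := by
  classical
  have := Fintype.ofFinite ι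
  let c : ι → E := fun i => L (Pi.single i 1)
  let J : Finset ι := Finset.univ.filter fun i => c i ≠ 0
  have hi₀J : i₀ ∈ J := Finset.mem_filter.2 ⟨Finset.mem_univ _, hi₀⟩
  let U := Submodule.span K (((J.erase i₀).image c : Finset E) : Set E)
  have hmem : ∀ i ≠ i₀, c i ∈ U := fun i hi => by
    by_cases hci : c i = 0
    · exact hci ▸ U.zero_mem
    · exact Submodule.subset_span (Finset.mem_image_of_mem c (by simp [J, hi, hci]))
  have hsum : c i₀ + ∑ i ∈ Finset.univ.erase i₀, c i = 0 := by
    rw [Finset.add_sum_erase _ c (Finset.mem_univ i₀), ← map_sum, ← hL]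
    exact congrArg L (Finset.univ_sum_single 1)
  have hmem₀ : c i₀ ∈ U := by
    rw [eq_neg_of_add_eq_zero_left hsum]
    exact U.neg_mem (U.sum_mem fun i hi => hmem i (Finset.ne_of_mem_erase hi))
  have hrange : LinearMap.range L ≤ U := by
    rw [LinearMap.range_eq_map, ← (Pi.basisFun K ι).span_eq, Submodule.map_span, ← Set.range_comp,
      Submodule.span_le]
    rintro _ ⟨i, rfl⟩
    rw [Function.comp_apply, Pi.basisFun_apply]
    by_cases hi : i = i₀
    exacts [hi ▸ hmem₀, hmem i hi]
  calc Module.finrank K (LinearMap.range L) ≤ Module.finrank K U :=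
        Submodule.finrank_mono hrange
    _ ≤ ((J.erase i₀).image c).card := finrank_span_finset_le_card _
    _ ≤ (J.erase i₀).card := Finset.card_image_le
    _ < J.card := Finset.card_erase_lt_of_mem hi₀J
    _ = {i | c i ≠ 0}.ncard := by rw [← Set.ncard_coe_finset, Finset.coe_filter_univ]

theorem IsGraphEmb.orbSet_eq (hE : IsGraphEmb θ σ φ) (f : F) :
    orbSet {θ, σ} f = {f, σ f, θ f, σ (θ f)} :=
  orbSet_pair_eq hE.1.apply_apply hE.2.1.apply_apply hE.apply_comm

theorem Realizes.edge_eq_edge_iff (hR : Realizes θ σ φ H p) (hE : IsGraphEmb θ σ φ) {f f' : F} :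
    s(p f', p (θ f')) = s(p f, p (θ f)) ↔ f' ∈ orbSet {θ, σ} f := by
  obtain ⟨hσ, -, -, -, -, hedge⟩ := hR
  constructor
  · intro h
    rcases Sym2.eq_iff.1 h with ⟨h, h'⟩ | ⟨h, h'⟩
    · exact hedge _ _ h.symm h'.symm
    · rw [← orbSet_eq_of_mem (apply_mem_orbSet (Or.inl rfl) mem_orbSet_self)]
      exact hedge _ _ h.symm (by rw [hE.1.apply_apply, h'])
  · refine apply_eq_of_mem_orbSet (f := fun f => s(p f, p (θ f))) ?_
    rintro s (rfl | rfl) x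
    · simp only [hE.1.apply_apply, Sym2.eq_swap]
    · simp only [hE.apply_comm, hσ]

theorem Realizes.ncard_eq_four_mul_ncard_image_edge [Finite F] (hR : Realizes θ σ φ H p)
    (hE : IsGraphEmb θ σ φ) {A : Set F} (hAθ : ∀ f, θ f ∈ A ↔ f ∈ A)
    (hAσ : ∀ f, σ f ∈ A ↔ f ∈ A) :
    A.ncard = 4 * ((fun f => s(p f, p (θ f))) '' A).ncard := by
  classical
  have := Fintype.ofFinite F
  have hfib : ∀ e ∈ A.toFinset.image fun f => s(p f, p (θ f)),
      (A.toFinset.filter fun f => s(p f, p (θ f)) = e).card = 4 := by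
    intro e he
    obtain ⟨f, hf, rfl⟩ := Finset.mem_image.1 he
    have horb : orbSet {θ, σ} f ⊆ A := by
      have hinv : ∀ s ∈ ({θ, σ} : Set (Equiv.Perm F)), ∀ x, (s x ∈ A) = (x ∈ A) := by
        rintro s (rfl | rfl) x
        exacts [propext (hAθ x), propext (hAσ x)]
      exact fun x hx => (apply_eq_of_mem_orbSet hinv hx).mpr (Set.mem_toFinset.1 hf)
    rw [← Set.ncard_coe_finset, ← hE.2.2.2 f, Nat.card_coe_set_eq]
    congr 1
    ext x
    simp only [Finset.coe_filter, Set.mem_toFinset, Set.mem_ofPred_eq, hR.edge_eq_edge_iff hE]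
    exact and_iff_right_of_imp (horb ·)
  have hcard := Finset.card_eq_sum_card_image (fun f => s(p f, p (θ f))) A.toFinset
  rw [Finset.sum_congr rfl hfib, Finset.sum_const, smul_eq_mul] at hcard
  rw [Set.ncard_eq_toFinset_card' A, hcard, mul_comm, ← Set.ncard_coe_finset, Finset.coe_image,
    Set.coe_toFinset]

-- Parity at one vertex: `σ` and `φ` pair off the flags there, so a face sum changes across an even
-- number of the edges at that vertex.
theorem Realizes.exists_apply_ne_of_apply_ne [Finite F] (hR : Realizes θ σ φ H p)
    (hE : IsGraphEmb θ σ φ) (hhφ : ∀ x, h (φ x) = h x) {f : F} (hf : h (σ f) ≠ h f) :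
    ∃ g, p g = p f ∧ p (θ g) ≠ p (θ f) ∧ h (σ g) ≠ h g := by
  classical
  obtain ⟨hσ, hφ, hadj, -, -, hedge⟩ := hR
  have hne : ∀ x, p (θ x) ≠ p x := fun x => (hadj x).ne'
  by_contra! hno
  let k : F → ZMod 2 := {x | p x = p f}.indicator h
  have hkφ : ∀ x, k (φ x) = k x := fun x => by
    simp only [k, Set.indicator_apply, Set.mem_ofPred_eq, hφ, hhφ]
  have hkσ : ∀ x, x ≠ f → x ≠ σ f → k (σ x) = k x := fun x hxf hxσ => by
    simp only [k, Set.indicator_apply, Set.mem_ofPred_eq, hσ]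
    split_ifs with hx
    · refine hno x hx fun hθx => ?_
      have horb := hedge f x hx.symm hθx.symm
      rw [hE.orbSet_eq] at horb
      rcases horb with rfl | rfl | rfl | rfl
      exacts [hxf rfl, hxσ rfl, hne _ hx, hne f ((hσ _).symm.trans hx)]
    · rfl
  have hkf := hE.2.2.1.apply_eq_of_forall_ne hE.2.1 hkφ hkσ
  simp only [k, Set.indicator_apply, Set.mem_ofPred_eq, hσ, if_true] at hkf
  exact hf hkf

theorem Realizes.twelve_le_ncard_setOf_apply_ne [Finite F] (hR : Realizes θ σ φ H p)
    (hE : IsGraphEmb θ σ φ) (hhθ : ∀ x, h (θ x) = h x) (hhφ : ∀ x, h (φ x) = h x) {f : F}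
    (hf : h (σ f) ≠ h f) : 12 ≤ {x | h (σ x) ≠ h x}.ncard := by
  classical
  have hA : ∀ x, h (σ (θ x)) = h (σ x) := fun x => by rw [← hE.apply_comm, hhθ]
  have hθf : h (σ (θ f)) ≠ h (θ f) := by rwa [hA, hhθ]
  obtain ⟨g, hgv, hgw, hg⟩ := hR.exists_apply_ne_of_apply_ne hE hhφ hf
  obtain ⟨g', hgv', hgw', hg'⟩ := hR.exists_apply_ne_of_apply_ne hE hhφ hθf
  rw [hE.1.apply_apply] at hgw'
  have hfadj := (hR.2.2.1 f).ne
  let T : Set (Sym2 W) := {s(p f, p (θ f)), s(p g, p (θ g)), s(p g', p (θ g'))}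
  have hT : T.ncard = 3 := Set.ncard_eq_three.2 ⟨_, _, _, by grind, by grind, by grind, rfl⟩
  have hsub : T ⊆ (fun x => s(p x, p (θ x))) '' {x | h (σ x) ≠ h x} := by
    rintro _ (rfl | rfl | rfl)
    exacts [⟨f, hf, rfl⟩, ⟨g, hg, rfl⟩, ⟨g', hg', rfl⟩]
  have hle := Set.ncard_le_ncard hsub
  rw [hR.ncard_eq_four_mul_ncard_image_edge hE]
  · omega
  · simp [hA, hhθ]
  · simp [hE.2.1.apply_apply, eq_comm]

/-- The coboundary across `σ` of a function on the set of orbits of `S`. When these orbits are the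
faces of an embedding, it takes a set of faces to the flags of the edges separating it from its
complement. -/
def orbCoboundary (S : Set (Equiv.Perm F)) (σ : Equiv.Perm F) :
    (MulAction.orbitRel.Quotient (Subgroup.closure S) F → ZMod 2) →ₗ[ZMod 2] (F → ZMod 2) :=
  (LinearMap.funLeft (ZMod 2) (ZMod 2) σ - LinearMap.id) ∘ₗ (orbInvariants S).subtype ∘ₗ
    (orbInvariantsEquiv S).toLinearMap

theorem orbCoboundary_apply {S : Set (Equiv.Perm F)}
    (k : MulAction.orbitRel.Quotient (Subgroup.closure S) F → ZMod 2) (x : F) :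
    orbCoboundary S σ k x = k (Quotient.mk _ (σ x)) - k (Quotient.mk _ x) := rfl

theorem orbCount_le_finrank_range_orbCoboundary_add [Finite F] {S : Set (Equiv.Perm F)}
    (hθ : θ ∈ S) (hφ : φ ∈ S) :
    orbCount S ≤ Module.finrank (ZMod 2) (LinearMap.range (orbCoboundary S σ)) +
      orbCount {θ, σ, φ} := by
  let ι := (orbInvariants S).subtype ∘ₗ (orbInvariantsEquiv S).toLinearMap
  have hι : Function.Injective ι := Subtype.val_injective.comp (orbInvariantsEquiv S).injective
  have hker : (LinearMap.ker (orbCoboundary S σ)).map ι ≤ orbInvariants {θ, σ, φ} := by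
    rintro _ ⟨k, hk, rfl⟩ s (rfl | rfl | rfl) x
    exacts [(orbInvariantsEquiv S k).2 _ hθ x, sub_eq_zero.1 (congrFun hk x),
      (orbInvariantsEquiv S k).2 _ hφ x]
  have hle := Submodule.finrank_mono hker
  have hrank := (orbCoboundary S σ).finrank_range_add_finrank_ker
  rw [(Submodule.equivMapOfInjective ι hι _).symm.finrank_eq, finrank_orbInvariants] at hle
  rw [(orbInvariantsEquiv S).finrank_eq, finrank_orbInvariants] at hrank
  omega

theorem Realizes.six_mul_ncard_orbCoboundary_ne_zero_le [Finite F] (hR : Realizes θ σ φ H p)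
    (hE : IsGraphEmb θ σ φ) {S : Set (Equiv.Perm F)}
    [DecidableEq (MulAction.orbitRel.Quotient (Subgroup.closure S) F)] {M : Set F}
    (hθ : θ ∈ S) (hφ : φ ∈ S) (hM : ∀ x, x ∉ M → σ x ∈ orbSet S x) :
    6 * {q | orbCoboundary S σ (Pi.single q 1) ≠ 0}.ncard ≤ M.ncard := by
  classical
  have := Fintype.ofFinite F
  have := Fintype.ofFinite (MulAction.orbitRel.Quotient (Subgroup.closure S) F)
  let d := fun q => orbCoboundary S σ (Pi.single q 1)
  let J := Finset.univ.filter fun q => d q ≠ 0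
  have hJ : ∀ q ∈ J, 12 ≤
      (M.toFinset.bipartiteAbove (fun q x => d q x ≠ 0) q).card := fun q hq => by
    obtain ⟨x, hx⟩ := Function.ne_iff.1 (Finset.mem_filter.1 hq).2
    let h := orbInvariantsEquiv S (Pi.single q 1)
    have hsupp : {x | h.1 (σ x) ≠ h.1 x} ⊆ M.toFinset.bipartiteAbove
        (fun q x => d q x ≠ 0) q := fun y hy => by
      rw [Finset.mem_coe, Finset.mem_bipartiteAbove, Set.mem_toFinset]
      exact ⟨by_contra fun hyM => hy (apply_eq_of_mem_orbSet h.2 (hM y hyM)), sub_ne_zero.2 hy⟩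
    refine (hR.twelve_le_ncard_setOf_apply_ne hE (h.2 θ hθ) (h.2 φ hφ) (sub_ne_zero.1 hx)).trans ?_
    rw [← Set.ncard_coe_finset]
    exact Set.ncard_le_ncard hsupp
  have hflag : ∀ x ∈ M.toFinset,
      (J.bipartiteBelow (fun q x => d q x ≠ 0) x).card ≤ 2 := fun x _ => by
    refine (Finset.card_le_card (t := {Quotient.mk _ (σ x), Quotient.mk _ x}) fun q hq => ?_).trans
      Finset.card_le_two
    by_contra hne
    simp only [Finset.mem_insert, Finset.mem_singleton, not_or] at hne
    refine ((Finset.mem_bipartiteBelow _).1 hq).2 ?_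
    simp only [d, orbCoboundary_apply, Pi.single_eq_of_ne' hne.1, Pi.single_eq_of_ne' hne.2,
      sub_self]
  have hdouble := Finset.card_mul_le_card_mul _ hJ hflag
  have hJcard : {q | orbCoboundary S σ (Pi.single q 1) ≠ 0}.ncard = J.card := by
    rw [← Set.ncard_coe_finset, Finset.coe_filter_univ]
  rw [Set.ncard_eq_toFinset_card' M]
  omega

-- The coboundaries of the faces sum to zero, so unless all of them vanish, their span has dimension
-- less than the number of nonzero ones, each of which involves at least three edges.
theorem Realizes.orbCount_le_or_six_mul_orbCount_le [Finite F] (hR : Realizes θ σ φ H p)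
    (hE : IsGraphEmb θ σ φ) {S : Set (Equiv.Perm F)} {M : Set F} (hθ : θ ∈ S) (hφ : φ ∈ S)
    (hM : ∀ x, x ∉ M → σ x ∈ orbSet S x) :
    orbCount S ≤ orbCount {θ, σ, φ} ∨
      6 * (orbCount S + 1) ≤ 6 * orbCount {θ, σ, φ} + M.ncard := by
  classical
  have hrank := orbCount_le_finrank_range_orbCoboundary_add (σ := σ) hθ hφ
  by_cases hzero : ∀ q, orbCoboundary S σ (Pi.single q 1) = 0
  · left
    have hL : orbCoboundary S σ = 0 := LinearMap.pi_ext' fun q => LinearMap.ext_ring (hzero q)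
    rwa [hL, LinearMap.range_zero, finrank_bot, zero_add] at hrank
  · right
    obtain ⟨q, hq⟩ := not_forall.1 hzero
    have hsum : orbCoboundary S σ 1 = 0 := funext fun _ => sub_self 1
    have hlt := finrank_range_lt_of_map_one_eq_zero hsum hq
    have hcard := hR.six_mul_ncard_orbCoboundary_ne_zero_le hE hθ hφ hM
    omega

end FaceBoundaries

section EulerBound

variable {F W : Type*} {θ σ φ : Equiv.Perm F} {H K : SimpleGraph W} {p : F → W}

theorem Realizes.orbCount_le_ncard_support [Finite F] (hR : Realizes θ σ φ H p) :
    orbCount {σ, φ} ≤ H.support.ncard := by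
  have hsep : Function.Injective fun q : MulAction.orbitRel.Quotient
      (Subgroup.closure {σ, φ}) F => p q.out := fun q q' h => by
    rw [← q.out_eq, ← q'.out_eq]
    exact (Quotient.sound (hR.2.2.2.1 _ _ h)).symm
  rw [← hR.range_eq_support, orbCount, ← Set.ncard_univ]
  refine Set.ncard_le_ncard_of_injOn _ (fun q _ => Set.mem_range_self _) hsep.injOn
    (Set.finite_range p)

-- Collapsing `K.support` to a point turns `p` into a function constant along the edges of `K`.
theorem Realizes.ncard_support_lt_orbCount_restrictPerm_add [Finite F] (hR : Realizes θ σ φ H p)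
    (hKH : K ≤ H) (hK : K.support.Nonempty) {M : Set F}
    (hM : ∀ f ∈ M, K.Adj (p f) (p (θ f))) (hMθ : ∀ f, θ f ∈ M ↔ f ∈ M) :
    H.support.ncard < orbCount {σ, φ, restrictPerm θ M hMθ} + K.support.ncard := by
  classical
  have hsupp := hR.range_eq_support
  obtain ⟨hσ, hφ, -, -, -, -⟩ := hR
  obtain ⟨w₀, hw₀⟩ := hK
  let c : W → W := fun w => if w ∈ K.support then w₀ else w
  have hc : ∀ s ∈ ({σ, φ, restrictPerm θ M hMθ} : Set (Equiv.Perm F)), ∀ f,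
      c (p (s f)) = c (p f) := by
    rintro s (rfl | rfl | rfl) f
    · rw [hσ]
    · rw [hφ]
    · by_cases hf : f ∈ M
      · rw [restrictPerm_apply_of_mem hMθ hf]
        simp only [c, if_pos (show p f ∈ K.support from ⟨_, hM f hf⟩),
          if_pos (show p (θ f) ∈ K.support from ⟨_, (hM f hf).symm⟩)]
      · rw [restrictPerm_apply_of_notMem hMθ hf]
  have hrange : insert w₀ (H.support \ K.support) ⊆ Set.range fun f => c (p f) := by
    rw [← hsupp]
    rintro w (rfl | ⟨⟨f, rfl⟩, hf⟩)
    · obtain ⟨f, hf⟩ : w ∈ Set.range p := hsupp ▸ SimpleGraph.support_mono hKH hw₀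
      exact ⟨f, by simp only [c, hf, if_pos hw₀]⟩
    · exact ⟨f, if_neg hf⟩
  have hfin : H.support.Finite := hsupp ▸ Set.finite_range p
  have hle := (Set.ncard_le_ncard hrange (Set.finite_range _)).trans (ncard_range_le_orbCount hc)
  rw [Set.ncard_insert_of_notMem (fun h => h.2 hw₀) hfin.sdiff] at hle
  have hsub := Set.ncard_sdiff_add_ncard_of_subset (SimpleGraph.support_mono hKH) hfin
  omega

theorem Realizes.image_edge_eq_edgeSet (hR : Realizes θ σ φ H p) (hKH : K ≤ H) :
    (fun f => s(p f, p (θ f))) '' {f | K.Adj (p f) (p (θ f))} = K.edgeSet := by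
  obtain ⟨-, -, -, -, hex, -⟩ := hR
  ext e
  induction e with | _ u v =>
  constructor
  · rintro ⟨f, hf, hfe⟩
    rwa [← hfe, SimpleGraph.mem_edgeSet]
  · intro huv
    obtain ⟨f, rfl, rfl⟩ := hex u v (hKH huv)
    exact ⟨f, huv, rfl⟩

theorem IsPlanarG.ncard_edgeSet_add_six_le (hH : IsPlanarG H) (hKH : K ≤ H)
    (hK : 3 ≤ K.support.ncard) : K.edgeSet.ncard + 6 ≤ 3 * K.support.ncard := by
  obtain ⟨F, _, θ, σ, φ, p, hE, hR, hg⟩ := hH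
  let M : Set F := {f | K.Adj (p f) (p (θ f))}
  have hMθ : ∀ f, θ f ∈ M ↔ f ∈ M := fun f => by
    simp only [M, Set.mem_ofPred_eq, hE.1.apply_apply, K.adj_comm]
  have hMσ : ∀ f, σ f ∈ M ↔ f ∈ M := fun f => by
    simp only [M, Set.mem_ofPred_eq, hE.apply_comm, hR.1]
  have hMσ' : ∀ f, σ f ∈ Mᶜ ↔ f ∈ Mᶜ := fun f => (hMσ f).not
  have hedges := hR.ncard_eq_four_mul_ncard_image_edge hE hMθ hMσ
  rw [hR.image_edge_eq_edgeSet hKH] at hedges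
  have hEuler := hE.orbCount_restrictPerm_add_le_of_genus_nonpos hg hMθ hMσ'
  have hverts := hR.orbCount_le_ncard_support
  have hcomps := hR.ncard_support_lt_orbCount_restrictPerm_add hKH
    (Set.nonempty_of_ncard_ne_zero (by omega)) (M := M) (fun _ hf => hf) hMθ
  have hfaces := hR.orbCount_le_or_six_mul_orbCount_le hE
    (S := {θ, φ, restrictPerm σ Mᶜ hMσ'}) (M := M) (by simp) (by simp) fun x hx => by
      rw [← restrictPerm_apply_of_mem hMσ' hx]
      exact apply_mem_orbSet (by simp) mem_orbSet_self
  omega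

theorem IsPlanarG.cliqueFree_five (hH : IsPlanarG H) : H.CliqueFree 5 := by
  by_contra hclique
  let f := SimpleGraph.topEmbeddingOfNotCliqueFree hclique
  let K := (⊤ : SimpleGraph (Fin 5)).map f.toEmbedding
  have hKH : K ≤ H := SimpleGraph.map_le_iff_le_comap _ _ _ |>.2 fun _ _ => f.map_adj_iff.2
  have hsupp : K.support.ncard = 5 := by
    rw [SimpleGraph.support_map, SimpleGraph.support_top_of_nontrivial,
      Set.ncard_image_of_injective _ f.toEmbedding.injective, Set.ncard_univ, Nat.card_fin]
  have hedges : K.edgeSet.ncard = 10 := by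
    rw [SimpleGraph.edgeSet_map, Set.ncard_image_of_injective _ (Function.Embedding.injective _),
      ← SimpleGraph.coe_edgeFinset, Set.ncard_coe_finset,
      SimpleGraph.card_edgeFinset_top_eq_card_choose_two, Fintype.card_fin]
    rfl
  have hle := hH.ncard_edgeSet_add_six_le hKH (by omega)
  omega

end EulerBound

section Gadget

variable {V : Type*} {G : SimpleGraph V}

/-- The vertex set of the copy of `K₅` by which `gadget G` replaces the edge `e`: the two ends of
`e` and the three private vertices. -/
def gadgetBlock (G : SimpleGraph V) (e : G.edgeSet) : Set (V ⊕ (G.edgeSet × Fin 3)) :=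
  Sum.inl '' (e : Sym2 V) ∪ Sum.inr '' ({e} ×ˢ Set.univ)

theorem inl_mem_gadgetBlock {e : G.edgeSet} {v : V} :
    Sum.inl v ∈ gadgetBlock G e ↔ v ∈ (e : Sym2 V) := by
  simp [gadgetBlock]

theorem inr_mem_gadgetBlock {e : G.edgeSet} {z : G.edgeSet × Fin 3} :
    Sum.inr z ∈ gadgetBlock G e ↔ z.1 = e := by
  simp [gadgetBlock, Prod.ext_iff, eq_comm]

theorem ncard_gadgetBlock_sdiff_inl (e : G.edgeSet) (C : Set V) :
    (gadgetBlock G e \ Sum.inl '' C).ncard = ((e : Sym2 V) \ C : Set V).ncard + 3 := by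
  have hsplit : gadgetBlock G e \ Sum.inl '' C =
      Sum.inl '' ((e : Sym2 V) \ C : Set V) ∪ Sum.inr '' ({e} ×ˢ Set.univ) := by
    ext (v | z) <;> simp [gadgetBlock]
  have hfin : ((e : Sym2 V) : Set V).Finite := by
    induction (e : Sym2 V) with | _ u v => exact Sym2.coe_mk ▸ Set.toFinite _
  rw [hsplit, Set.ncard_union_eq Set.disjoint_image_inl_image_inr (hfin.sdiff.image _)
      ((Set.toFinite _).image _),
    Set.ncard_image_of_injective _ Sum.inl_injective,
    Set.ncard_image_of_injective _ Sum.inr_injective, Set.ncard_prod, Set.ncard_singleton,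
    Set.ncard_univ, Nat.card_fin, one_mul]

theorem gadget_adj_iff {x y : V ⊕ (G.edgeSet × Fin 3)} :
    (gadget G).Adj x y ↔ x ≠ y ∧ ∃ e, x ∈ gadgetBlock G e ∧ y ∈ gadgetBlock G e := by
  rw [gadget, SimpleGraph.fromRel_adj]
  refine and_congr_right fun hxy => ?_
  rcases x with u | ⟨e, i⟩ <;> rcases y with w | ⟨e', j⟩ <;>
    simp only [inl_mem_gadgetBlock, inr_mem_gadgetBlock]
  · have huw : u ≠ w := fun h => hxy (congrArg Sum.inl h)
    simp [G.adj_comm w u, Sym2.mem_and_mem_iff huw]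
  all_goals grind

theorem induce_gadget_eq_iSup (S : Set (V ⊕ (G.edgeSet × Fin 3))) :
    (gadget G).induce S =
      ⨆ e, (⊤ : SimpleGraph (Subtype.val ⁻¹' gadgetBlock G e : Set S)).spanningCoe := by
  ext x y
  simp only [SimpleGraph.induce_adj, gadget_adj_iff, SimpleGraph.iSup_adj, spanningCoe_top_adj,
    Set.mem_preimage, Subtype.coe_ne_coe, exists_and_left]

theorem subsingleton_sdiff_of_cover {C : Set V} (hC : ∀ u v, G.Adj u v → u ∈ C ∨ v ∈ C)
    (e : G.edgeSet) : ((e : Sym2 V) \ C : Set V).Subsingleton := by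
  obtain ⟨e, he⟩ := e
  induction e with | _ u v =>
  rintro x ⟨hx, hxC⟩ y ⟨hy, hyC⟩
  rcases Sym2.mem_iff.1 hx with rfl | rfl <;> rcases Sym2.mem_iff.1 hy with rfl | rfl
  exacts [rfl, ((hC _ _ he).elim hxC hyC).elim, ((hC _ _ he).elim hyC hxC).elim, rfl]

theorem subsingleton_gadgetBlock_inter {C : Set V} {e : G.edgeSet}
    (he : ((e : Sym2 V) \ C : Set V).Subsingleton) :
    ((gadgetBlock G e \ Sum.inl '' C) ∩ ⋃ e' ≠ e, gadgetBlock G e').Subsingleton := by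
  have hinl : ∀ x ∈ (gadgetBlock G e \ Sum.inl '' C) ∩ ⋃ e' ≠ e, gadgetBlock G e',
      ∃ v ∈ ((e : Sym2 V) \ C : Set V), Sum.inl v = x := by
    rintro (v | z) ⟨⟨hx, hxC⟩, hx'⟩
    · exact ⟨v, ⟨inl_mem_gadgetBlock.1 hx, fun hv => hxC ⟨v, hv, rfl⟩⟩, rfl⟩
    · obtain ⟨e', hne, hze'⟩ := Set.mem_iUnion₂.1 hx'
      exact (hne ((inr_mem_gadgetBlock.1 hze').symm.trans (inr_mem_gadgetBlock.1 hx))).elim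
  intro x hx y hy
  obtain ⟨v, hv, rfl⟩ := hinl x hx
  obtain ⟨w, hw, rfl⟩ := hinl y hy
  rw [he hv hw]

theorem isPlanarG_induce_gadget_of_cover [Finite G.edgeSet] {C : Set V}
    (hC : ∀ u v, G.Adj u v → u ∈ C ∨ v ∈ C) :
    IsPlanarG ((gadget G).induce (Sum.inl '' C)ᶜ) := by
  have hsub := subsingleton_sdiff_of_cover hC
  rw [induce_gadget_eq_iSup]
  refine isPlanarG_iSup (fun e => isPlanarG_spanningCoe_top ?_) fun e => ?_
  · have := (hsub e).finite.to_subtype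
    have hle := Set.ncard_le_one_iff_subsingleton.2 (hsub e)
    rw [← Set.ncard_image_of_injective _ Subtype.val_injective, Subtype.image_preimage_coe,
      Set.inter_comm, ← Set.sdiff_eq, ncard_gadgetBlock_sdiff_inl]
    omega
  · refine ((subsingleton_gadgetBlock_inter (hsub e)).preimage Subtype.val_injective).anti ?_
    rintro x ⟨hx, hx'⟩
    obtain ⟨e', hne, hx'⟩ := Set.mem_iUnion₂.1 hx'
    have hxe : x ∈ Subtype.val ⁻¹' gadgetBlock G e := support_spanningCoe_top_subset hx
    have hxe' : x ∈ Subtype.val ⁻¹' gadgetBlock G e' := support_spanningCoe_top_subset hx'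
    exact ⟨⟨hxe, x.2⟩, Set.mem_iUnion₂.2 ⟨e', hne, hxe'⟩⟩

theorem ncard_gadgetBlock (e : G.edgeSet) : (gadgetBlock G e).ncard = 5 := by
  have hcard := ncard_gadgetBlock_sdiff_inl e ∅
  have he : ((e : Sym2 V) : Set V).ncard = 2 := by
    obtain ⟨e, he⟩ := e
    induction e with | _ u v => exact Sym2.coe_mk ▸ Set.ncard_pair (G.ne_of_adj he)
  rwa [Set.image_empty, Set.sdiff_empty, Set.sdiff_empty, he] at hcard

theorem inter_gadgetBlock_nonempty_of_isPlanarG {S : Set (V ⊕ (G.edgeSet × Fin 3))}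
    (hS : IsPlanarG ((gadget G).induce Sᶜ)) (e : G.edgeSet) :
    (S ∩ gadgetBlock G e).Nonempty := by
  by_contra hempty
  have hsub : gadgetBlock G e ⊆ Sᶜ := fun x hx hxS => hempty ⟨x, hxS, hx⟩
  have hcard := ncard_gadgetBlock e
  have hfin : (gadgetBlock G e).Finite := Set.finite_of_ncard_ne_zero (by omega)
  obtain ⟨T, hT⟩ := hfin.exists_finset_coe
  rw [← hT] at hsub hcard
  have hclique : (gadget G).IsClique (T : Set _) := fun x hx y hy hxy =>
    gadget_adj_iff.2 ⟨hxy, e, hT ▸ hx, hT ▸ hy⟩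
  exact (SimpleGraph.cliqueFree_induce_iff _ _ _).1 hS.cliqueFree_five hsub
    ⟨hclique, (Set.ncard_coe_finset T).symm.trans hcard⟩

/-- A vertex of `G` lying on every edge `e` with `x ∈ gadgetBlock G e`: deleting it from `G` hits
all the edges whose block is hit by deleting `x`. -/
noncomputable def gadgetOwner (x : V ⊕ (G.edgeSet × Fin 3)) : V :=
  Sum.elim id (fun z => (Quot.out (z.1 : Sym2 V)).1) x

theorem gadgetOwner_mem_of_mem_gadgetBlock {x : V ⊕ (G.edgeSet × Fin 3)} {e : G.edgeSet}
    (hx : x ∈ gadgetBlock G e) : gadgetOwner x ∈ (e : Sym2 V) := by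
  rcases x with v | z
  · exact inl_mem_gadgetBlock.1 hx
  · exact inr_mem_gadgetBlock.1 hx ▸ Sym2.out_fst_mem _

end Gadget

theorem stmt16 {V : Type*} [Fintype V] (G : SimpleGraph V) (k : ℕ) :
    (∃ C : Set V, Nat.card C ≤ k ∧ ∀ u v, G.Adj u v → u ∈ C ∨ v ∈ C) ↔
    (∃ S : Set (V ⊕ (G.edgeSet × Fin 3)), Nat.card S ≤ k ∧
      IsPlanarG ((gadget G).induce Sᶜ)) := by
  constructor
  · rintro ⟨C, hk, hC⟩
    refine ⟨Sum.inl '' C, ?_, isPlanarG_induce_gadget_of_cover hC⟩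
    rwa [Nat.card_image_of_injective Sum.inl_injective]
  · rintro ⟨S, hk, hS⟩
    refine ⟨gadgetOwner '' S, (Set.ncard_image_le S.toFinite).trans hk, fun u v huv => ?_⟩
    obtain ⟨x, hxS, hx⟩ := inter_gadgetBlock_nonempty_of_isPlanarG hS ⟨s(u, v), huv⟩
    have hxC : gadgetOwner x ∈ gadgetOwner '' S := Set.mem_image_of_mem _ hxS
    rcases Sym2.mem_iff.1 (gadgetOwner_mem_of_mem_gadgetBlock hx) with h | h
    exacts [Or.inl (h ▸ hxC), Or.inr (h ▸ hxC)]
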